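/- arXiv:math/0008142 — 8 statements merged into one kernel-verified Lean document; each statement's English description precedes it below -/
import Mathlib

section
/- Let K be a division ring and R = K[t]. For all g, h ∈ R and a ∈ K: if h(a) = 0 then (gh)(a) = 0; and if h(a) ≠ 0 then (gh)(a) = g(h(a)·a·h(a)⁻¹)·h(a). -/
/-!
Both sides are additive in `g`, so it suffices to treat `g = b t ^ n`. Since `t` is central,
`(b t ^ n h)(a) = b h(a) a ^ n` (`eval_monomial_mul_left`), which vanishes if `c = h(a)` does;
otherwise `c a ^ n = (c a c⁻¹) ^ n c`.
-/

open Polynomial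

/-- The product formula when the left factor is a monomial; it holds over any semiring because
`X` is central in `K[X]`. -/
lemma eval_monomial_mul_left {K : Type*} [Semiring K] (n : ℕ) (b : K) (h : K[X]) (a : K) :
    (monomial n b * h).eval a = b * (h.eval a * a ^ n) := by
  rw [← C_mul_X_pow_eq_monomial, mul_assoc, X_pow_mul, eval_C_mul, eval_mul_X_pow]

/-- **Product Formula.** For `g, h ∈ K[t]` and `a ∈ K`: if `h(a) = 0` then `(gh)(a) = 0`,
and if `h(a) ≠ 0` then `(gh)(a) = g(h(a)·a·h(a)⁻¹)·h(a)`. -/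
theorem stmt0 {K : Type*} [DivisionRing K] (g h : K[X]) (a : K) :
    (h.eval a = 0 → (g * h).eval a = 0) ∧
    (h.eval a ≠ 0 →
      (g * h).eval a = g.eval (h.eval a * a * (h.eval a)⁻¹) * h.eval a) := by
  constructor
  · intro h0
    induction g using Polynomial.induction_on' with
    | add p q hp hq => rw [add_mul, eval_add, hp, hq, add_zero]
    | monomial n b => rw [eval_monomial_mul_left, h0, zero_mul, mul_zero]
  · intro h0
    -- With `c = h(a)`, the relation `c * a = (c * a * c⁻¹) * c` passes to powers.
    have hc : SemiconjBy (h.eval a) a (h.eval a * a * (h.eval a)⁻¹) := by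
      rw [SemiconjBy, inv_mul_cancel_right₀ h0]
    induction g using Polynomial.induction_on' with
    | add p q hp hq => rw [add_mul, eval_add, hp, hq, eval_add, add_mul]
    | monomial n b =>
      rw [eval_monomial_mul_left, eval_monomial, mul_assoc, (hc.pow_right n).eq]
end

section
/- Let K be a division ring and R = K[t]. If Δ ⊆ K is a nonempty algebraic set whose minimal polynomial f_Δ has degree n, then f_Δ = (t−c_1)···(t−c_n) for some c_1,…,c_n ∈ K, where each c_i is conjugate to some element of Δ (i.e. c_i = d·a·d⁻¹ for some a ∈ Δ and d ∈ K*). -/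
/-!
Any factorization `f = q * p` of the minimal polynomial with `deg q > 0` can be refined.
The factor `p` has degree smaller than `f`, so it does not vanish on all of `Δ`; choose
`a ∈ Δ` with `p(a) ≠ 0`. By the product formula `(q * p)(a) = q(c) p(a)`, where
`c = p(a) a p(a)⁻¹`, the equation `f(a) = 0` forces `q(c) = 0`, hence `q = q' * (X - c)` by the
remainder theorem, and `f = q' * ((X - c) * p)`. Starting from `p = 1` and inducting on `deg q`
splits `f` into linear factors whose roots are conjugates of elements of `Δ`.
-/

open Polynomial

/-- `Δ` is an algebraic subset of `K`: some nonzero polynomial vanishes on it. -/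
def IsAlgebraicSet {K : Type*} [DivisionRing K] (Δ : Set K) : Prop :=
  ∃ f : K[X], f ≠ 0 ∧ ∀ a ∈ Δ, f.eval a = 0

/-- `f` is the minimal polynomial of `Δ`: the monic generator of the left ideal of
polynomials vanishing on `Δ`. -/
def IsMinPolyOf {K : Type*} [DivisionRing K] (Δ : Set K) (f : K[X]) : Prop :=
  f.Monic ∧ ∀ g : K[X], (∀ a ∈ Δ, g.eval a = 0) ↔ ∃ q : K[X], g = q * f

/-- The product formula for evaluation over a division ring, where evaluation is not
multiplicative: the left factor is evaluated at a conjugate of `a`. -/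
lemma eval_mul_conj {K : Type*} [DivisionRing K] (q p : K[X]) (a : K) (h : p.eval a ≠ 0) :
    (q * p).eval a = q.eval (p.eval a * a * (p.eval a)⁻¹) * p.eval a := by
  induction q using Polynomial.induction_on' with
  | add q₁ q₂ h₁ h₂ => simp only [add_mul, eval_add, h₁, h₂]
  | monomial n b =>
    have hc : (p.eval a * a * (p.eval a)⁻¹) ^ n = p.eval a * a ^ n * (p.eval a)⁻¹ :=
      Units.conj_pow (Units.mk0 _ h) a n
    rw [← C_mul_X_pow_eq_monomial, mul_assoc, X_pow_mul, eval_C_mul, eval_mul_X_pow, eval_C_mul,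
      eval_X_pow, hc, mul_assoc b, inv_mul_cancel_right₀ h]

/-- The right remainder theorem: the remainder of right division by `X - c` is `q(c)`. -/
lemma exists_eq_mul_X_sub_C_add {K : Type*} [DivisionRing K] (q : K[X]) (c : K) :
    ∃ q' : K[X], q = q' * (X - C c) + C (q.eval c) := by
  induction q using Polynomial.induction_on' with
  | add q₁ q₂ h₁ h₂ =>
    obtain ⟨r₁, h₁⟩ := h₁
    obtain ⟨r₂, h₂⟩ := h₂
    refine ⟨r₁ + r₂, ?_⟩
    rw [eval_add, C_add, add_mul, add_add_add_comm, ← h₁, ← h₂]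
  | monomial n b =>
    refine ⟨C b * ∑ i ∈ Finset.range n, X ^ i * C c ^ (n - 1 - i), ?_⟩
    rw [mul_assoc, (commute_X (C c)).geom_sum₂_mul, eval_monomial, C_mul, C_pow, mul_sub,
      sub_add_cancel, C_mul_X_pow_eq_monomial]

/-- Every monic left factor `q` of the minimal polynomial splits into linear factors; allowing an
arbitrary cofactor `p` lets the induction on `deg q` move a linear factor from `q` to `p`. -/
lemma exists_linear_factors {K : Type*} [DivisionRing K] (Δ : Set K) (f : K[X])
    (hf : IsMinPolyOf Δ f) (n : ℕ) :
    ∀ q p : K[X], f = q * p → q.Monic → q.natDegree = n →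
      ∃ c : Fin n → K,
        (∀ i, ∃ a ∈ Δ, ∃ d : K, d ≠ 0 ∧ c i = d * a * d⁻¹) ∧
        q = (List.ofFn fun i => X - C (c i)).prod := by
  induction n with
  | zero =>
    intro q p _ hq hd
    exact ⟨Fin.elim0, fun i => i.elim0, by simpa using hq.natDegree_eq_zero.mp hd⟩
  | succ m ih =>
    intro q p hfq hq hd
    have hp0 : p ≠ 0 := by
      rintro rfl
      exact hf.1.ne_zero (by rw [hfq, mul_zero])
    obtain ⟨a, ha, hpa⟩ : ∃ a ∈ Δ, p.eval a ≠ 0 := by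
      by_contra! hvan
      obtain ⟨r, hr⟩ := (hf.2 p).mp hvan
      rw [hfq, ← mul_assoc] at hr
      have hr1 : r * q = 1 := mul_right_cancel₀ hp0 (by rw [← hr, one_mul])
      have hr0 : r ≠ 0 := by
        rintro rfl
        simp at hr1
      have hdeg := natDegree_mul hr0 hq.ne_zero
      rw [hr1, natDegree_one] at hdeg
      omega
    have hfa : f.eval a = 0 := (hf.2 f).mpr ⟨1, (one_mul f).symm⟩ a ha
    rw [hfq, eval_mul_conj q p a hpa] at hfa
    set c := p.eval a * a * (p.eval a)⁻¹ with hc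
    have hqc : q.eval c = 0 := (mul_eq_zero.mp hfa).resolve_right hpa
    obtain ⟨q', hq'⟩ := exists_eq_mul_X_sub_C_add q c
    rw [hqc, C_0, add_zero] at hq'
    have hmon : q'.Monic := (monic_X_sub_C c).of_mul_monic_right (hq' ▸ hq)
    have hdq' : q'.natDegree = m := by
      have h := hmon.natDegree_mul (monic_X_sub_C c)
      rw [← hq', natDegree_X_sub_C] at h
      omega
    obtain ⟨c', hconj, hprod⟩ := ih q' ((X - C c) * p) (by rw [← mul_assoc, ← hq', hfq]) hmon hdq'
    refine ⟨Fin.snoc c' c, fun i => ?_, ?_⟩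
    · induction i using Fin.lastCases with
      | last => exact ⟨a, ha, p.eval a, hpa, by rw [Fin.snoc_last]⟩
      | cast i => simpa only [Fin.snoc_castSucc] using hconj i
    · rw [List.ofFn_succ', List.concat_eq_append, List.prod_append, List.prod_singleton]
      simp only [Fin.snoc_castSucc, Fin.snoc_last]
      rw [hq', ← hprod]

/-- The minimal polynomial of a nonempty algebraic set `Δ` of rank `n` factors as
`(t−c₁)⋯(t−cₙ)` with each `cᵢ` conjugate to some element of `Δ`. -/
theorem stmt1 {K : Type*} [DivisionRing K] (Δ : Set K) (hne : Δ.Nonempty)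
    (halg : IsAlgebraicSet Δ) (f : K[X]) (hf : IsMinPolyOf Δ f) (n : ℕ)
    (hdeg : f.natDegree = n) :
    ∃ c : Fin n → K,
      (∀ i, ∃ a ∈ Δ, ∃ d : K, d ≠ 0 ∧ c i = d * a * d⁻¹) ∧
      f = (List.ofFn fun i => X - C (c i)).prod := by
  exact exists_linear_factors Δ f hf n f 1 (mul_one f).symm hf.1 hdeg
end

section
/- Let K be a division ring and R = K[t]. A monic quadratic polynomial f ∈ R is a Wedderburn polynomial if and only if its zero set V(f) contains at least two distinct elements of K. -/
/-!
Evaluation at `a` sends `∑ bᵢ Xⁱ` to `∑ bᵢ aⁱ`, so a zero of `f` is a zero of every left multiple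
`q * f` (`eval_mul_of_right_eval_eq_zero`).

If `V(f)` had at most one element, some linear `X - C a` would vanish on it, and a W-polynomial of
degree two cannot right-divide a polynomial of degree one. Conversely, division with remainder on
the right by the monic quadratic `f` (`exists_right_div_quadratic`) gives `g = q * f + (c X + d)`.
If `g` vanishes on `V(f)`, then `c X + d` has two distinct zeros, so `c = d = 0` and `g = q * f`.
-/

open Polynomial

/-- The zero set `V(f) = {a ∈ K : f(a) = 0}`. -/
def zeroSet {K : Type*} [DivisionRing K] (f : K[X]) : Set K := {a : K | f.eval a = 0}

/-- `f` is a Wedderburn polynomial: the minimal polynomial of its own zero set. -/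
def IsWPoly {K : Type*} [DivisionRing K] (f : K[X]) : Prop :=
  IsMinPolyOf (zeroSet f) f

lemma eval_mul_of_right_eval_eq_zero {K : Type*} [DivisionRing K] {f : K[X]} {a : K}
    (h : f.eval a = 0) (q : K[X]) : (q * f).eval a = 0 := by
  induction q using Polynomial.induction_on with
  | C c => simp [eval_C_mul, h]
  | add p q hp hq => rw [add_mul, eval_add, hp, hq, add_zero]
  | monomial n c _ =>
    -- Powers of `X` are central, so they can be moved to the right of `f`.
    rw [mul_assoc, X_pow_mul, eval_C_mul, eval_mul_X_pow, h, zero_mul, mul_zero]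

/-- Division on the right by a monic quadratic. Mathlib's `%ₘ` puts the divisor on the left of the
quotient, so it does not apply over a noncommutative ring. -/
lemma exists_right_div_quadratic {K : Type*} [DivisionRing K] (f : K[X]) (hmonic : f.Monic)
    (hdeg : f.natDegree = 2) (g : K[X]) :
    ∃ (q : K[X]) (c d : K), g = q * f + (C c * X + C d) := by
  have hf : f = X ^ 2 + (C (f.coeff 1) * X + C (f.coeff 0)) := by
    have h2 : f.coeff 2 = 1 := by rw [← hdeg]; exact hmonic
    conv_lhs => rw [f.as_sum_range_C_mul_X_pow, hdeg]
    simp only [Finset.sum_range_succ, Finset.sum_range_zero, h2]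
    simp only [map_one, one_mul, pow_zero, mul_one, pow_one, zero_add]
    abel
  have hX2 : (X : K[X]) ^ 2 = f - (C (f.coeff 1) * X + C (f.coeff 0)) :=
    eq_sub_of_add_eq hf.symm
  induction g using Polynomial.induction_on with
  | C a => exact ⟨0, 0, a, by simp⟩
  | add p q hp hq =>
    obtain ⟨q₁, c₁, d₁, h₁⟩ := hp
    obtain ⟨q₂, c₂, d₂, h₂⟩ := hq
    refine ⟨q₁ + q₂, c₁ + c₂, d₁ + d₂, ?_⟩
    rw [h₁, h₂]
    simp only [C_add, add_mul]
    abel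
  | monomial n a ih =>
    obtain ⟨q, c, d, h⟩ := ih
    -- Multiply by `X` and replace `c X ^ 2` using `hX2`.
    refine ⟨X * q + C c, d - c * f.coeff 1, -(c * f.coeff 0), ?_⟩
    have hstep : C a * X ^ (n + 1) = X * (q * f) + (C c * X ^ 2 + C d * X) := by
      rw [pow_succ, ← mul_assoc, h, add_mul, X_mul, add_mul, mul_assoc (C c), ← pow_two]
    rw [hstep, hX2]
    simp only [C_sub, C_neg, C_mul, add_mul, sub_mul, mul_sub, mul_add, mul_assoc]
    abel

/-- A monic quadratic `f` is a W-polynomial iff `V(f)` has at least two elements. -/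
theorem stmt3 {K : Type*} [DivisionRing K] (f : K[X]) (hmonic : f.Monic)
    (hdeg : f.natDegree = 2) :
    IsWPoly f ↔ ∃ a b : K, a ≠ b ∧ f.eval a = 0 ∧ f.eval b = 0 := by
  constructor
  · rintro ⟨-, hW⟩
    by_contra hno
    have hsub : ∃ a : K, ∀ b ∈ zeroSet f, b = a := by
      by_cases hne : ∃ a, f.eval a = 0
      · obtain ⟨a, ha⟩ := hne
        exact ⟨a, fun b hb => by_contra fun hba => hno ⟨b, a, hba, hb, ha⟩⟩
      · exact ⟨0, fun b hb => (hne ⟨b, hb⟩).elim⟩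
    obtain ⟨a, ha⟩ := hsub
    obtain ⟨q, hq⟩ := (hW (X - C a)).1 fun b hb => by simp [ha b hb]
    have hq0 : q ≠ 0 := by
      rintro rfl
      exact X_sub_C_ne_zero a (by simpa using hq)
    have hd := congrArg natDegree hq
    rw [natDegree_X_sub_C, natDegree_mul hq0 hmonic.ne_zero, hdeg] at hd
    omega
  · rintro ⟨a, b, hab, ha, hb⟩
    refine ⟨hmonic, fun g => ⟨fun hg => ?_, ?_⟩⟩
    · obtain ⟨q, c, d, h⟩ := exists_right_div_quadratic f hmonic hdeg g
      have hlin : ∀ x : K, f.eval x = 0 → c * x + d = 0 := fun x hx => by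
        have hgx := hg x hx
        rw [h, eval_add, eval_mul_of_right_eval_eq_zero hx] at hgx
        simpa using hgx
      have hc : c * (a - b) = 0 := by
        rw [mul_sub, sub_eq_zero]
        exact add_right_cancel ((hlin a ha).trans (hlin b hb).symm)
      have hc0 : c = 0 := (mul_eq_zero.1 hc).resolve_right (sub_ne_zero.2 hab)
      have hd0 : d = 0 := by simpa [hc0] using hlin a ha
      exact ⟨q, by simpa [hc0, hd0] using h⟩
    · rintro ⟨q, rfl⟩ x hx
      exact eval_mul_of_right_eval_eq_zero hx q
end

section
/- Let K be a division ring, R = K[t], and f = tⁿ + b_{n−1}t^{n−1} + ⋯ + b_0 ∈ R with n ≥ 1, with companion matrix C(f) ∈ M_n(K). Then the following are equivalent: (1) f is a product of linear factors in R and R/Rf is a semisimple left R-module; (2) C(f) is similar over K to a diagonal matrix, i.e. there is an invertible matrix U ∈ GL_n(K) with U⁻¹·C(f)·U diagonal. -/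
/-!
Let `M = R/Rf` with `R = K[t]`. The classes of `1, t, …, t^{n-1}` form a left `K`-basis of `M`, and
in the resulting row coordinates the action of `t` is `v ↦ v ᵥ* C(f)` (`coordEquiv_vecMul`). Hence
`V * C(f) * V⁻¹` is diagonal exactly when the rows of `V` form a `K`-basis of `M` consisting of
*eigenvectors*, i.e. elements `w` with `t w = d w` for some `d ∈ K`. The scalars need not commute
with `d`, but nonzero multiples of eigenvectors are again eigenvectors, so the `R`-span of
eigenvectors equals their `K`-span. The theorem becomes: `f` is a product of linear factors and `M`
is semisimple if and only if eigenvectors span `M`.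

* If `M` is semisimple, let `E` be the span of the eigenvectors and `E'` a complement of `E`.
  By induction on the number of factors, every `m` killed by a product of linear factors
  `(t - a) * p` lies in `E`: the element `p m` is killed by `t - a`, so it lies in `E`; hence the
  `E'`-component of `m` is killed by `p` and lies in `E` (`mem_eigenspan`).
* If eigenvectors span `M`, then `M` is a sum of submodules of the form `R w = K w`, which are
  zero or simple. Moreover, if `f ≠ 1`, some eigenvector is the class of a `g ∉ Rf` with
  `deg g < n`, and `(t - d) g = q f` forces `q` to be a nonzero constant, so `f = (t - a) h`.
  Since `R/Rh` is a quotient of `R/Rf`, it is again spanned by eigenvectors, and induction on the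
  degree applies (`exists_linear_factorization`).
-/

open Polynomial

/-- The companion matrix of a monic polynomial `f = tⁿ + b_{n−1}t^{n−1} + ⋯ + b₀`:
`1`'s on the superdiagonal and last row `(−b₀, …, −b_{n−1})`. -/
def companionMatrix {K : Type*} [DivisionRing K] (n : ℕ) (f : K[X]) :
    Matrix (Fin n) (Fin n) K :=
  Matrix.of fun i j =>
    if (i : ℕ) + 1 = n then -f.coeff (j : ℕ)
    else if (j : ℕ) = (i : ℕ) + 1 then 1 else 0

section Eigenvectors

variable {K M : Type*} [DivisionRing K] [AddCommGroup M] [Module K[X] M]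

/-- The elements `w` of a `K[X]`-module on which `X` acts as multiplication by a scalar `d : K`. -/
def eigenvectors (K M : Type*) [DivisionRing K] [AddCommGroup M] [Module K[X] M] : Set M :=
  {w | ∃ d : K, (X : K[X]) • w = (C d : K[X]) • w}

lemma C_smul_mem_eigenvectors {w : M} (hw : w ∈ eigenvectors K M) (c : K) :
    (C c : K[X]) • w ∈ eigenvectors K M := by
  obtain ⟨d, hd⟩ := hw
  by_cases hc : c = 0
  · exact ⟨0, by simp [hc]⟩
  · refine ⟨c * d * c⁻¹, ?_⟩
    rw [smul_smul, X_mul_C, mul_smul, hd, smul_smul, smul_smul, ← C_mul, ← C_mul,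
      mul_assoc (c * d), inv_mul_cancel₀ hc, mul_one]

lemma exists_smul_eq_C_smul {w : M} (hw : w ∈ eigenvectors K M) (p : K[X]) :
    ∃ c : K, p • w = (C c : K[X]) • w := by
  obtain ⟨d, hd⟩ := hw
  have hpow : ∀ k : ℕ, (X ^ k : K[X]) • w = (C (d ^ k) : K[X]) • w := by
    intro k
    induction k with
    | zero => simp
    | succ k ih =>
      rw [pow_succ, mul_smul, hd, smul_smul, X_pow_mul_C, mul_smul, ih, smul_smul, ← C_mul,
        ← pow_succ']
  induction p using Polynomial.induction_on' with
  | add p q hp hq =>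
    obtain ⟨a, ha⟩ := hp
    obtain ⟨b, hb⟩ := hq
    exact ⟨a + b, by rw [add_smul, ha, hb, C_add, add_smul]⟩
  | monomial k a =>
    exact ⟨a * d ^ k, by rw [← C_mul_X_pow_eq_monomial, mul_smul, hpow, smul_smul, C_mul]⟩

lemma isSemisimpleModule_span_eigenvector {w : M} (hw : w ∈ eigenvectors K M) :
    IsSemisimpleModule K[X] (Submodule.span K[X] {w}) := by
  by_cases h0 : w = 0
  · subst h0
    rw [Submodule.span_zero_singleton]
    exact (isSemisimpleModule_iff _ _).2
      ⟨fun N => ⟨⊤, by rw [Subsingleton.elim N ⊥]; exact isCompl_bot_top⟩⟩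
  have hatom : IsAtom (Submodule.span K[X] {w}) := by
    refine ⟨by simpa using h0, fun N hN => ?_⟩
    by_contra hne
    obtain ⟨x, hxN, hx0⟩ := N.exists_mem_ne_zero_of_ne_bot hne
    obtain ⟨p, rfl⟩ := Submodule.mem_span_singleton.1 (hN.le hxN)
    obtain ⟨c, hc⟩ := exists_smul_eq_C_smul hw p
    have hc0 : c ≠ 0 := by
      rintro rfl
      simp [hc] at hx0
    apply hN.not_ge
    rw [Submodule.span_singleton_le_iff_mem]
    have := N.smul_mem (C c⁻¹) hxN
    rwa [hc, smul_smul, ← C_mul, inv_mul_cancel₀ hc0, C_1, one_smul] at this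
  have := isSimpleModule_iff_isAtom.2 hatom
  infer_instance

lemma isSemisimpleModule_of_span_eigenvectors
    (h : Submodule.span K[X] (eigenvectors K M) = ⊤) : IsSemisimpleModule K[X] M := by
  refine isSemisimpleModule_of_isSemisimpleModule_submodule'
    (p := fun w : eigenvectors K M => Submodule.span K[X] {(w : M)})
    (fun w => isSemisimpleModule_span_eigenvector w.2) ?_
  rw [← Submodule.span_range_eq_iSup, Subtype.range_coe, h]

/-- In a semisimple module, every element killed by a product of linear factors is a sum of
eigenvectors: split off a complement of the span of all eigenvectors and induct on the number of
factors. -/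
lemma mem_eigenspan [IsSemisimpleModule K[X] M] (L : List K) (m : M)
    (hm : (L.map fun a => (X : K[X]) - C a).prod • m = 0) :
    m ∈ Submodule.span K[X] (eigenvectors K M) := by
  induction L generalizing m with
  | nil =>
    have : m = 0 := by simpa using hm
    simp [this]
  | cons a L ih =>
    rw [List.map_cons, List.prod_cons, mul_smul] at hm
    set p := (L.map fun a => (X : K[X]) - C a).prod
    set E := Submodule.span K[X] (eigenvectors K M)
    have hpm : p • m ∈ E := Submodule.subset_span ⟨a, by rwa [sub_smul, sub_eq_zero] at hm⟩
    obtain ⟨E', hE'⟩ := exists_isCompl E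
    obtain ⟨e, he, e', he', rfl⟩ := Submodule.mem_sup.1
      (show m ∈ E ⊔ E' by rw [hE'.sup_eq_top]; trivial)
    refine E.add_mem he (ih e' ?_)
    refine Submodule.disjoint_def.1 hE'.disjoint _ ?_ (E'.smul_mem p he')
    rw [smul_add] at hpm
    exact (E.add_mem_iff_right (E.smul_mem p he)).1 hpm

/-- The `K[X]`-span of the eigenvectors is already their `K`-span. -/
lemma span_eigenvectors_base [Module K M] [IsScalarTower K K[X] M]
    (h : Submodule.span K[X] (eigenvectors K M) = ⊤) :
    Submodule.span K (eigenvectors K M) = ⊤ := by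
  rw [eq_top_iff]
  rintro m -
  have hm : m ∈ Submodule.span K[X] (eigenvectors K M) := by rw [h]; trivial
  induction hm using Submodule.closure_induction with
  | zero => exact zero_mem _
  | add x y _ _ hx hy => exact add_mem hx hy
  | smul_mem p w hw =>
    obtain ⟨c, hc⟩ := exists_smul_eq_C_smul hw p
    rw [hc]
    exact Submodule.subset_span (C_smul_mem_eigenvectors hw c)

lemma C_smul_eq [Module K M] [IsScalarTower K K[X] M] (c : K) (m : M) :
    (C c : K[X]) • m = c • m := by
  rw [← mul_one (C c), ← smul_eq_C_mul, smul_assoc, one_smul]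

end Eigenvectors

section Quotient

variable {K : Type*} [DivisionRing K]

/-- The cyclic left module `K[X] / K[X] f`. -/
abbrev CyclicQuot (f : K[X]) : Type _ :=
  K[X] ⧸ (Submodule.span K[X] {f} : Submodule K[X] K[X])

/-- The left-linear map sending a row vector `v` to the class of `∑ i, v i * X ^ i`. -/
noncomputable def coordMap (n : ℕ) (f : K[X]) : (Fin n → K) →ₗ[K] CyclicQuot f :=
  Fintype.linearCombination K
    fun i : Fin n => (Submodule.Quotient.mk (X ^ (i : ℕ)) : CyclicQuot f)

lemma coordMap_apply (n : ℕ) (f : K[X]) (v : Fin n → K) :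
    coordMap n f v = Submodule.Quotient.mk (∑ i, C (v i) * X ^ (i : ℕ)) := by
  rw [coordMap, Fintype.linearCombination_apply, ← Submodule.mkQ_apply, map_sum]
  refine Finset.sum_congr rfl fun i _ => ?_
  rw [← smul_eq_C_mul, Submodule.mkQ_apply, Submodule.Quotient.mk_smul]

lemma degree_sum_lt (n : ℕ) (v : Fin n → K) :
    (∑ i, C (v i) * X ^ (i : ℕ)).degree < (n : WithBot ℕ) := by
  refine (degree_sum_le _ _).trans_lt ((Finset.sup_lt_iff (WithBot.bot_lt_coe n)).2 ?_)
  intro i _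
  exact (degree_C_mul_X_pow_le _ _).trans_lt (WithBot.coe_lt_coe.2 i.2)

lemma eq_zero_of_mem_span {f p : K[X]} (hp : p ∈ Submodule.span K[X] {f})
    (hdeg : p.degree < f.degree) : p = 0 := by
  obtain ⟨q, rfl⟩ := Submodule.mem_span_singleton.1 hp
  by_contra h
  have hq : q ≠ 0 := by
    rintro rfl
    simp at h
  rw [smul_eq_mul, degree_mul] at hdeg
  have h1 : (0 : WithBot ℕ) ≤ q.degree := zero_le_degree_iff.2 hq
  exact absurd hdeg (not_lt.2 (by simpa using add_le_add_left h1 f.degree))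

lemma coordMap_injective {n : ℕ} {f : K[X]} (hf : f.Monic) (hdeg : f.natDegree = n) :
    Function.Injective (coordMap n f) := by
  rw [injective_iff_map_eq_zero]
  intro v hv
  rw [coordMap_apply, Submodule.Quotient.mk_eq_zero] at hv
  have h := eq_zero_of_mem_span hv
    (by rw [degree_eq_natDegree hf.ne_zero, hdeg]; exact degree_sum_lt n v)
  funext j
  have := congrArg (fun p => coeff p (j : ℕ)) h
  simpa [finsetSum_coeff, coeff_X_pow, Fin.val_inj] using this

/-- Multiplication by `X` is right multiplication by the companion matrix on row coordinates. -/
lemma X_smul_coordMap {n : ℕ} {f : K[X]} (hf : f.Monic) (hdeg : f.natDegree = n)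
    (v : Fin n → K) :
    (X : K[X]) • coordMap n f v = coordMap n f (Matrix.vecMul v (companionMatrix n f)) := by
  have key : ∀ i : Fin n, (Submodule.Quotient.mk (X ^ ((i : ℕ) + 1)) : CyclicQuot f) =
      coordMap n f (companionMatrix n f i) := by
    intro i
    rw [coordMap_apply]
    by_cases hi : (i : ℕ) + 1 = n
    · rw [hi, Submodule.Quotient.eq]
      -- the difference `X ^ n - ∑ (-b_j) X ^ j` is `f` itself
      have : X ^ n - ∑ j : Fin n, C (companionMatrix n f i j) * X ^ (j : ℕ) = f := by
        have h2 := hf.as_sum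
        rw [hdeg, ← Fin.sum_univ_eq_sum_range (fun j => C (f.coeff j) * X ^ j)] at h2
        conv_rhs => rw [h2]
        simp [companionMatrix, hi, sub_eq_add_neg]
      rw [this]
      exact Submodule.mem_span_singleton_self f
    · have hlt : (i : ℕ) + 1 < n := by have := i.2; omega
      congr 1
      rw [Finset.sum_eq_single (⟨(i : ℕ) + 1, hlt⟩ : Fin n)]
      · simp [companionMatrix, hi]
      · intro j _ hj
        have : (j : ℕ) ≠ (i : ℕ) + 1 := fun h => hj (Fin.ext h)
        simp [companionMatrix, hi, this]
      · simp
  rw [Matrix.vecMul_eq_sum, map_sum, coordMap_apply, ← Submodule.mkQ_apply, map_sum,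
    Finset.smul_sum]
  refine Finset.sum_congr rfl fun i _ => ?_
  rw [← map_smul, Submodule.mkQ_apply, smul_eq_mul, ← mul_assoc, X_mul_C, mul_assoc,
    ← pow_succ', ← smul_eq_C_mul, Submodule.Quotient.mk_smul, key, ← map_smul]

lemma coordMap_surjective {n : ℕ} (hn : 1 ≤ n) {f : K[X]} (hf : f.Monic)
    (hdeg : f.natDegree = n) : Function.Surjective (coordMap n f) := by
  rw [← LinearMap.range_eq_top]
  have hpow : ∀ k : ℕ, (Submodule.Quotient.mk (X ^ k) : CyclicQuot f) ∈
      LinearMap.range (coordMap n f) := by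
    intro k
    induction k with
    | zero =>
      refine ⟨Pi.single ⟨0, hn⟩ 1, ?_⟩
      rw [coordMap_apply, Finset.sum_eq_single (⟨0, hn⟩ : Fin n)]
      · simp
      · intro j _ hj
        simp [hj]
      · simp
    | succ k ih =>
      obtain ⟨v, hv⟩ := ih
      refine ⟨_, (X_smul_coordMap hf hdeg v).symm.trans ?_⟩
      rw [hv, ← Submodule.Quotient.mk_smul, smul_eq_mul, ← pow_succ']
  rw [eq_top_iff]
  rintro m -
  obtain ⟨p, rfl⟩ := Submodule.Quotient.mk_surjective _ m
  induction p using Polynomial.induction_on' with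
  | add p q hp hq => exact add_mem hp hq
  | monomial k a =>
    rw [← C_mul_X_pow_eq_monomial, ← smul_eq_C_mul, Submodule.Quotient.mk_smul]
    exact Submodule.smul_mem _ _ (hpow k)

/-- The classes of `1, X, …, X ^ (n - 1)` as left coordinates on `K[X] / K[X] f`. -/
noncomputable def coordEquiv {n : ℕ} (hn : 1 ≤ n) {f : K[X]} (hf : f.Monic)
    (hdeg : f.natDegree = n) : (Fin n → K) ≃ₗ[K] CyclicQuot f :=
  LinearEquiv.ofBijective (coordMap n f)
    ⟨coordMap_injective hf hdeg, coordMap_surjective hn hf hdeg⟩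

lemma coordEquiv_vecMul {n : ℕ} (hn : 1 ≤ n) {f : K[X]} (hf : f.Monic)
    (hdeg : f.natDegree = n) (v : Fin n → K) :
    coordEquiv hn hf hdeg (Matrix.vecMul v (companionMatrix n f)) =
      (X : K[X]) • coordEquiv hn hf hdeg v :=
  (X_smul_coordMap hf hdeg v).symm

lemma diagonal_iff_span_eigenvectors {n : ℕ} (hn : 1 ≤ n) {f : K[X]} (hf : f.Monic)
    (hdeg : f.natDegree = n) :
    (∃ U V : Matrix (Fin n) (Fin n) K, U * V = 1 ∧ V * U = 1 ∧
      ∃ d : Fin n → K, V * companionMatrix n f * U = Matrix.diagonal d) ↔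
    Submodule.span K[X] (eigenvectors K (CyclicQuot f)) = ⊤ := by
  set φ := coordEquiv hn hf hdeg
  constructor
  · rintro ⟨U, V, hUV, hVU, d, hd⟩
    have hrow : V * companionMatrix n f = Matrix.diagonal d * V := by
      rw [← hd, Matrix.mul_assoc _ U V, hUV, Matrix.mul_one]
    have hV : ∀ i, φ (V i) ∈ eigenvectors K (CyclicQuot f) := by
      intro i
      refine ⟨d i, ?_⟩
      have h1 : Matrix.vecMul (V i) (companionMatrix n f) = d i • V i := by
        funext j
        have := congrFun (congrFun hrow i) j
        rw [Matrix.diagonal_mul] at this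
        exact this
      rw [C_smul_eq, ← LinearEquiv.map_smul φ, ← h1]
      exact (coordEquiv_vecMul hn hf hdeg (V i)).symm
    rw [eq_top_iff]
    rintro m -
    obtain ⟨v, rfl⟩ := φ.surjective m
    have hv : v = Matrix.vecMul (Matrix.vecMul v U) V := by
      rw [Matrix.vecMul_vecMul, hUV, Matrix.vecMul_one]
    rw [hv, Matrix.vecMul_eq_sum, map_sum]
    refine Submodule.sum_mem _ fun i _ => ?_
    rw [map_smul, ← C_smul_eq]
    exact Submodule.smul_mem _ _ (Submodule.subset_span (hV i))
  · intro h
    have hK := span_eigenvectors_base h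
    let b₀ := Module.Basis.ofSpan hK.ge
    let e := b₀.indexEquiv (Module.Basis.ofEquivFun φ.symm)
    let b := b₀.reindex e
    have hb : ∀ i, b i ∈ eigenvectors K (CyclicQuot f) := by
      intro i
      rw [Module.Basis.reindex_apply]
      exact Module.Basis.ofSpan_subset hK.ge ⟨_, rfl⟩
    choose d hd using hb
    let V : Matrix (Fin n) (Fin n) K := fun i => φ.symm (b i)
    let U : Matrix (Fin n) (Fin n) K := fun i => b.equivFun (φ (Pi.single i 1))
    have hUV : U * V = 1 := by
      have h1 : ∀ i, Matrix.vecMul (U i) V = Pi.single i 1 := by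
        intro i
        apply φ.injective
        rw [Matrix.vecMul_eq_sum, map_sum]
        simp only [map_smul, V, LinearEquiv.apply_symm_apply, U]
        exact b.sum_equivFun _
      ext i j
      have := congrFun (h1 i) j
      rw [Matrix.one_eq_pi_single]
      exact this
    have hVU : V * U = 1 := mul_eq_one_comm.1 hUV
    refine ⟨U, V, hUV, hVU, d, ?_⟩
    have hrow : V * companionMatrix n f = Matrix.diagonal d * V := by
      have h1 : ∀ i, Matrix.vecMul (V i) (companionMatrix n f) = d i • V i := by
        intro i
        apply φ.injective
        rw [map_smul, ← C_smul_eq]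
        refine (coordEquiv_vecMul hn hf hdeg (V i)).trans ?_
        change (X : K[X]) • φ (φ.symm (b i)) = (C (d i) : K[X]) • φ (φ.symm (b i))
        rw [LinearEquiv.apply_symm_apply, hd]
      ext i j
      rw [Matrix.diagonal_mul]
      exact congrFun (h1 i) j
    rw [hrow, Matrix.mul_assoc, hVU, Matrix.mul_one]

/-- If eigenvectors span `K[X] / K[X] f`, then a nonzero eigenvector splits a linear factor off
`f` from the left, and the remaining factor satisfies the same hypothesis. -/
lemma exists_linear_factorization (n : ℕ) (f : K[X]) (hf : f.Monic) (hdeg : f.natDegree = n)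
    (h : Submodule.span K[X] (eigenvectors K (CyclicQuot f)) = ⊤) :
    ∃ L : List K, f = (L.map fun a => X - C a).prod := by
  induction n generalizing f with
  | zero => exact ⟨[], by simpa using hf.natDegree_eq_zero.1 hdeg⟩
  | succ n ih =>
    have hw : ∃ w ∈ eigenvectors K (CyclicQuot f), w ≠ 0 := by
      by_contra! hcon
      have hbot : (⊤ : Submodule K[X] (CyclicQuot f)) = ⊥ := by
        rw [← h, Submodule.span_eq_bot]
        exact hcon
      have h1 : (Submodule.Quotient.mk 1 : CyclicQuot f) = 0 := by
        rw [← Submodule.mem_bot K[X], ← hbot]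
        trivial
      rw [Submodule.Quotient.mk_eq_zero] at h1
      refine one_ne_zero (eq_zero_of_mem_span h1 ?_)
      rw [degree_one, degree_eq_natDegree hf.ne_zero, hdeg]
      exact_mod_cast n.succ_pos
    obtain ⟨w, ⟨d, hd⟩, hw0⟩ := hw
    obtain ⟨v, rfl⟩ := coordMap_surjective n.succ_pos hf hdeg w
    have hglt := degree_sum_lt (n + 1) v
    rw [coordMap_apply] at hd hw0
    generalize (∑ i, C (v i) * X ^ (i : ℕ)) = g at hd hw0 hglt
    have hg0 : g ≠ 0 := by
      rintro rfl
      exact hw0 rfl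
    rw [← sub_eq_zero, ← sub_smul, ← Submodule.Quotient.mk_smul, Submodule.Quotient.mk_eq_zero,
      smul_eq_mul] at hd
    obtain ⟨q, hq⟩ := Submodule.mem_span_singleton.1 hd
    rw [smul_eq_mul] at hq
    have hq0 : q ≠ 0 := by
      rintro rfl
      rw [zero_mul] at hq
      exact mul_ne_zero (X_sub_C_ne_zero d) hg0 hq.symm
    have hgn : g.natDegree < n + 1 := (natDegree_lt_iff_degree_lt hg0).2 hglt
    have hdegs := congrArg natDegree hq
    rw [natDegree_mul hq0 hf.ne_zero, natDegree_mul (X_sub_C_ne_zero d) hg0, natDegree_X_sub_C,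
      hdeg] at hdegs
    obtain ⟨c, rfl⟩ := natDegree_eq_zero.1 (show q.natDegree = 0 by omega)
    have hc : c ≠ 0 := by
      rintro rfl
      simp at hq0
    -- conjugating by `c` moves the constant past the linear factor
    have hfac : f = (X - C (c⁻¹ * d * c)) * (C c⁻¹ * g) := by
      have h1 : (X - C (c⁻¹ * d * c)) * C c⁻¹ = C c⁻¹ * (X - C d) := by
        rw [sub_mul, mul_sub, X_mul_C, ← C_mul, ← C_mul, mul_assoc _ c, mul_inv_cancel₀ hc,
          mul_one]
      rw [← mul_assoc, h1, mul_assoc, ← hq, ← mul_assoc, ← C_mul, inv_mul_cancel₀ hc, C_1,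
        one_mul]
    generalize c⁻¹ * d * c = a at hfac
    generalize C c⁻¹ * g = k at hfac
    have hk : k.Monic := by
      have := hf
      rw [hfac] at this
      exact (monic_X_sub_C a).of_mul_monic_left this
    have hkdeg : k.natDegree = n := by
      have := hdeg
      rw [hfac, (monic_X_sub_C a).natDegree_mul hk, natDegree_X_sub_C] at this
      omega
    have hle : Submodule.span K[X] {f} ≤ Submodule.span K[X] {k} := by
      rw [Submodule.span_singleton_le_iff_mem, hfac]
      exact Submodule.mem_span_singleton.2 ⟨_, rfl⟩
    obtain ⟨L, hL⟩ := ih k hk hkdeg (by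
      have hsurj := LinearMap.range_eq_top.2 (Submodule.factor_surjective hle)
      rw [eq_top_iff, ← hsurj, LinearMap.range_eq_map, ← h, Submodule.map_span,
        Submodule.span_le]
      rintro _ ⟨w, ⟨d', hd'⟩, rfl⟩
      exact Submodule.subset_span ⟨d', by rw [← map_smul, hd', map_smul]⟩)
    exact ⟨a :: L, by rw [List.map_cons, List.prod_cons, ← hL, hfac]⟩

end Quotient

/-- For monic `f` of degree `n ≥ 1`, the following are equivalent:
(1) `f` is a product of linear factors and `R/Rf` is a semisimple left `R`-module;
(2) the companion matrix `C(f)` is similar over `K` to a diagonal matrix. -/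
theorem stmt6 {K : Type*} [DivisionRing K] (n : ℕ) (hn : 1 ≤ n) (f : K[X])
    (hmonic : f.Monic) (hdeg : f.natDegree = n) :
    ((∃ L : List K, f = (L.map fun a => X - C a).prod) ∧
      IsSemisimpleModule K[X]
        (K[X] ⧸ (Submodule.span K[X] {f} : Submodule K[X] K[X]))) ↔
    (∃ U V : Matrix (Fin n) (Fin n) K, U * V = 1 ∧ V * U = 1 ∧
      ∃ d : Fin n → K, V * companionMatrix n f * U = Matrix.diagonal d) := by
  rw [diagonal_iff_span_eigenvectors hn hmonic hdeg]
  refine ⟨?_, fun h => ⟨exists_linear_factorization n f hmonic hdeg h,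
    isSemisimpleModule_of_span_eigenvectors h⟩⟩
  rintro ⟨⟨L, hL⟩, hss⟩
  -- the class of `1` generates the module and is killed by `f`
  have h1 : (Submodule.Quotient.mk 1 : CyclicQuot f) ∈
      Submodule.span K[X] (eigenvectors K (CyclicQuot f)) := by
    refine mem_eigenspan L _ ?_
    rw [← hL, ← Submodule.Quotient.mk_smul, smul_eq_mul, mul_one, Submodule.Quotient.mk_eq_zero]
    exact Submodule.mem_span_singleton_self f
  rw [eq_top_iff]
  rintro m -
  obtain ⟨p, rfl⟩ := Submodule.Quotient.mk_surjective _ m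
  have := Submodule.smul_mem _ p h1
  rwa [← Submodule.Quotient.mk_smul, smul_eq_mul, mul_one] at this
end

section
/- (Left-right symmetry of Wedderburn polynomials) Let K be a division ring, R = K[t], and let f ∈ R be monic of degree n. Then there exist a_1,…,a_n ∈ K with R·f = R·(t−a_1) ∩ ⋯ ∩ R·(t−a_n) if and only if there exist b_1,…,b_n ∈ K with f·R = (t−b_1)·R ∩ ⋯ ∩ (t−b_n)·R. -/
open Polynomial

/-!
Suppose `f·R = ⋂ᵢ (t - bᵢ)·R` with `f` monic of degree `n`. A monic common right multiple `gᵢ` of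
the `t - bⱼ`, `j ≠ i`, can be found in degree at most `n - 1` (`exists_common_multiple`), and a
degree count forces `f = gᵢ (t - aᵢ)` for some `aᵢ`. The `gᵢ` together with `f` generate the unit
right ideal, by Lagrange interpolation: `gᵢ` is a nonzero constant modulo `(t - bᵢ)·R`
and vanishes modulo `(t - bⱼ)·R` for `j ≠ i`.

Left ideals of `R` are principal, so `⋂ᵢ R·(t - aᵢ) = R·c` for some `c`, and `f = d c`. Writing
`c = uᵢ (t - aᵢ)` and cancelling gives `gᵢ = d uᵢ`; hence `d` left-divides all the `gᵢ` and `f`, so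
it is a unit and `R·f = R·c`. The other implication is the same statement over the opposite
division ring.
-/

section Wedderburn

variable {K : Type*} [DivisionRing K]

/-- Division with remainder with the divisor on the right (`Polynomial.modByMonic` has it on the
left). -/
lemma exists_right_division (m : K[X]) (hm : m ≠ 0) (p : K[X]) :
    ∃ q : K[X], (p - q * m).degree < m.degree := by
  induction hN : p.degree using WellFoundedLT.induction generalizing p with
  | ind N ih =>
    subst hN
    by_cases hlt : p.degree < m.degree
    · exact ⟨0, by simpa using hlt⟩
    rw [not_lt] at hlt
    have hp : p ≠ 0 := by
      rintro rfl
      simp [hm] at hlt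
    have hlm : m.leadingCoeff ≠ 0 := leadingCoeff_ne_zero.mpr hm
    have hlp : p.leadingCoeff ≠ 0 := leadingCoeff_ne_zero.mpr hp
    have hnat : m.natDegree ≤ p.natDegree := natDegree_le_natDegree hlt
    set s : K[X] := C (p.leadingCoeff * m.leadingCoeff⁻¹) * X ^ (p.natDegree - m.natDegree)
      with hs
    have hc : p.leadingCoeff * m.leadingCoeff⁻¹ ≠ 0 := mul_ne_zero hlp (inv_ne_zero hlm)
    have hdeg : p.degree = (s * m).degree := by
      rw [degree_mul, hs, degree_C_mul_X_pow _ hc, degree_eq_natDegree hp, degree_eq_natDegree hm]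
      norm_cast
      omega
    have hlead : p.leadingCoeff = (s * m).leadingCoeff := by
      rw [leadingCoeff_mul, hs, leadingCoeff_C_mul_X_pow, mul_assoc, inv_mul_cancel₀ hlm, mul_one]
    obtain ⟨q, hq⟩ := ih _ (degree_sub_lt_left hdeg hp hlead) (p - s * m) rfl
    exact ⟨q + s, by rwa [add_mul, add_comm, ← sub_sub]⟩

/-- Left ideals of `K[X]` are principal. -/
lemma exists_left_generator (I : Ideal K[X]) : ∃ c ∈ I, ∀ p ∈ I, ∃ q, p = q * c := by
  by_cases h : ∃ p ∈ I, p ≠ 0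
  · obtain ⟨c, ⟨hcI, hc0⟩, hmin⟩ := WellFounded.has_min
      (InvImage.wf (fun p : K[X] => p.degree) wellFounded_lt) {p | p ∈ I ∧ p ≠ 0} h
    refine ⟨c, hcI, fun p hp => ?_⟩
    obtain ⟨q, hq⟩ := exists_right_division c hc0 p
    refine ⟨q, ?_⟩
    by_contra hne
    exact hmin (p - q * c) ⟨I.sub_mem hp (I.mul_mem_left q hcI), sub_ne_zero.mpr hne⟩ hq
  · push Not at h
    exact ⟨0, I.zero_mem, fun p hp => ⟨0, by simp [h p hp]⟩⟩

lemma exists_const_remainder (b : K) (p : K[X]) : ∃ c : K, (X - C b) ∣ p - C c := by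
  have h1 := modByMonic_add_div p (X - C b)
  have h2 : (p %ₘ (X - C b)).degree < 1 := by
    simpa using degree_modByMonic_lt p (monic_X_sub_C b)
  have hc := eq_C_of_degree_le_zero (Order.lt_succ_iff.mp (h2 : _ < Order.succ (0 : WithBot ℕ)))
  exact ⟨(p %ₘ (X - C b)).coeff 0, p /ₘ (X - C b), by rw [sub_eq_iff_eq_add', ← hc]; exact h1.symm⟩

/-- A polynomial not in `(t - b)·R` can be moved into it by a linear factor on the right; the
root of that factor is a conjugate of `b`. -/
lemma exists_mul_linear (b : K) (g : K[X]) (hg : ¬ (X - C b) ∣ g) :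
    ∃ a : K, (X - C b) ∣ g * (X - C a) := by
  obtain ⟨c, hc⟩ := exists_const_remainder b g
  have hc0 : c ≠ 0 := by
    rintro rfl
    exact hg (by simpa using hc)
  refine ⟨c⁻¹ * b * c, ?_⟩
  have h : g * (X - C (c⁻¹ * b * c)) = (g - C c) * (X - C (c⁻¹ * b * c)) + (X - C b) * C c := by
    have : C c * C (c⁻¹ * b * c) = C b * C c := by
      rw [← C_mul, ← C_mul, mul_assoc, mul_inv_cancel_left₀ hc0]
    rw [sub_mul, sub_mul (X : K[X]), mul_sub (C c), this, X_mul_C]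
    abel
  rw [h]
  exact dvd_add (hc.mul_right _) (dvd_mul_right _ _)

lemma exists_common_multiple {ι : Type*} [DecidableEq ι] (b : ι → K) (s : Finset ι) :
    ∃ g : K[X], g.Monic ∧ g.natDegree ≤ s.card ∧ ∀ j ∈ s, (X - C (b j)) ∣ g := by
  induction s using Finset.induction_on with
  | empty => exact ⟨1, monic_one, by simp, by simp⟩
  | insert i s his ih =>
    obtain ⟨g, hg, hd, hs⟩ := ih
    rw [Finset.card_insert_of_notMem his]
    by_cases h : (X - C (b i)) ∣ g
    · refine ⟨g, hg, by omega, fun j hj => ?_⟩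
      rcases Finset.mem_insert.mp hj with rfl | hj
      exacts [h, hs j hj]
    · obtain ⟨a, ha⟩ := exists_mul_linear (b i) g h
      refine ⟨g * (X - C a), hg.mul (monic_X_sub_C a), ?_, fun j hj => ?_⟩
      · rw [hg.natDegree_mul (monic_X_sub_C a), natDegree_X_sub_C]
        omega
      · rcases Finset.mem_insert.mp hj with rfl | hj
        exacts [ha, (hs j hj).mul_right _]

/-- One implication of the symmetry, from right ideals to left ideals; divisibility `g ∣ p` is
membership in `g·R`. -/
lemma left_of_right (f : K[X]) (hf : f.Monic) (n : ℕ) (hn : f.natDegree = n) (b : Fin n → K)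
    (hb : ∀ p, f ∣ p ↔ ∀ i, (X - C (b i)) ∣ p) :
    ∃ a : Fin n → K, ∀ p : K[X],
      (∃ q, p = q * f) ↔ ∀ i, ∃ q, p = q * (X - C (a i)) := by
  have key : ∀ i, ∃ g : K[X], ∃ a : K, f = g * (X - C a) ∧ ¬ (X - C (b i)) ∣ g ∧
      ∀ j, j ≠ i → (X - C (b j)) ∣ g := by
    intro i
    have hpos : 0 < n := i.pos
    obtain ⟨g, hg, hd, hs⟩ := exists_common_multiple b (Finset.univ.erase i)
    have hs' : ∀ j, j ≠ i → (X - C (b j)) ∣ g := fun j hj => hs j (by simp [hj])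
    have hd' : g.natDegree ≤ n - 1 := by simpa using hd
    have hng : ¬ (X - C (b i)) ∣ g := by
      intro h
      have hfg : f ∣ g := (hb g).mpr fun j => by
        by_cases hj : j = i
        exacts [hj ▸ h, hs' j hj]
      obtain ⟨q, hq⟩ := hfg
      have hq0 : q ≠ 0 := by
        rintro rfl
        exact hg.ne_zero (by simpa using hq)
      have := congrArg natDegree hq
      rw [natDegree_mul hf.ne_zero hq0] at this
      omega
    obtain ⟨a, ha⟩ := exists_mul_linear (b i) g hng
    refine ⟨g, a, ?_, hng, hs'⟩
    obtain ⟨q, hq⟩ : f ∣ g * (X - C a) := (hb _).mpr fun j => by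
      by_cases hj : j = i
      exacts [hj ▸ ha, (hs' j hj).mul_right _]
    have hqm : q.Monic := hf.of_mul_monic_left (hq ▸ hg.mul (monic_X_sub_C a))
    have hdeg := congrArg natDegree hq
    rw [hg.natDegree_mul (monic_X_sub_C a), hf.natDegree_mul hqm, natDegree_X_sub_C] at hdeg
    have hq1 : q = 1 := hqm.natDegree_eq_zero.mp (by omega)
    rw [hq, hq1, mul_one]
  choose g a hfg hng hgj using key
  refine ⟨a, fun p => ⟨?_, ?_⟩⟩
  · rintro ⟨q, rfl⟩ i
    exact ⟨q * g i, by rw [mul_assoc, ← hfg]⟩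
  intro hp
  -- Interpolation: constants `e i` with `1 - ∑ gᵢ eᵢ ∈ f·R`.
  have interp : ∀ i, ∃ e : K, (X - C (b i)) ∣ 1 - g i * C e := by
    intro i
    obtain ⟨c, hc⟩ := exists_const_remainder (b i) (g i)
    have hc0 : c ≠ 0 := by
      intro h
      exact hng i (by simpa [h] using hc)
    refine ⟨c⁻¹, ?_⟩
    have : 1 - g i * C c⁻¹ = -((g i - C c) * C c⁻¹) := by
      rw [sub_mul, ← C_mul, mul_inv_cancel₀ hc0, C_1]
      abel
    rw [this]
    exact (hc.mul_right _).neg_right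
  choose e he using interp
  have hone : f ∣ 1 - ∑ i, g i * C (e i) := (hb _).mpr fun i => by
    rw [← Finset.add_sum_erase _ _ (Finset.mem_univ i), ← sub_sub]
    exact dvd_sub (he i) (Finset.dvd_sum fun j hj =>
      (hgj j i (Finset.ne_of_mem_erase hj).symm).mul_right _)
  obtain ⟨c, hcI, hgen⟩ := exists_left_generator (⨅ i, Ideal.span {X - C (a i)} : Ideal K[X])
  simp only [Submodule.mem_iInf, Ideal.mem_span_singleton'] at hcI hgen
  obtain ⟨d, hd⟩ := hgen f fun i => ⟨g i, (hfg i).symm⟩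
  have hdg : ∀ i, d ∣ g i := fun i => by
    obtain ⟨u, hu⟩ := hcI i
    refine ⟨u, mul_right_cancel₀ (X_sub_C_ne_zero (a i)) ?_⟩
    rw [← hfg, mul_assoc, hu, hd]
  have hd1 : d ∣ 1 := by
    have h1 : d ∣ 1 - ∑ i, g i * C (e i) := (Dvd.intro c hd.symm).trans hone
    have h2 : d ∣ ∑ i, g i * C (e i) := Finset.dvd_sum fun i _ => (hdg i).mul_right _
    simpa using dvd_add h1 h2
  obtain ⟨w, hw⟩ := hd1
  have hwd : w * d = 1 := mul_eq_one_symm hw.symm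
  obtain ⟨q, hq⟩ := hgen p fun i => (hp i).imp fun _ h => h.symm
  exact ⟨q * w, by rw [hq, hd, mul_assoc, ← mul_assoc w, hwd, one_mul]⟩

open MulOpposite in
/-- The other implication, obtained from `left_of_right` over `Kᵐᵒᵖ` through the
anti-isomorphism `K[X] → Kᵐᵒᵖ[X]`. -/
lemma right_of_left (f : K[X]) (hf : f.Monic) (n : ℕ) (hn : f.natDegree = n) (a : Fin n → K)
    (ha : ∀ p, (∃ q, p = q * f) ↔ ∀ i, ∃ q, p = q * (X - C (a i))) :
    ∃ b : Fin n → K, ∀ p : K[X], f ∣ p ↔ ∀ i, (X - C (b i)) ∣ p := by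
  let φ : K[X] ≃ Kᵐᵒᵖ[X] := opEquiv.trans (opRingEquiv K).toEquiv
  have hmul : ∀ p q, φ (p * q) = φ q * φ p := fun p q => by simp [φ]
  have hlin : ∀ x : K, φ (X - C x) = X - C (op x) := fun x => by simp [φ]
  have hL : ∀ p m, (∃ q, p = q * m) ↔ φ m ∣ φ p := fun p m => by
    constructor
    · rintro ⟨q, rfl⟩
      exact ⟨φ q, hmul _ _⟩
    · rintro ⟨q, hq⟩
      exact ⟨φ.symm q, φ.injective (by rw [hmul, φ.apply_symm_apply, hq])⟩
  have hR : ∀ p m, m ∣ p ↔ ∃ q, φ p = q * φ m := fun p m => by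
    constructor
    · rintro ⟨q, rfl⟩
      exact ⟨φ q, hmul _ _⟩
    · rintro ⟨q, hq⟩
      exact ⟨φ.symm q, φ.injective (by rw [hmul, φ.apply_symm_apply, hq])⟩
  have hφm : (φ f).Monic := by
    have : (φ f).leadingCoeff = op f.leadingCoeff := by simp [φ]
    rw [Monic, this, hf.leadingCoeff, op_one]
  have hφd : (φ f).natDegree = n := by simp [φ, hn]
  obtain ⟨b, hb⟩ := left_of_right (φ f) hφm n hφd (fun i => op (a i)) fun p => by
    obtain ⟨p, rfl⟩ := φ.surjective p
    simp only [← hlin, ← hL, ha]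
  refine ⟨fun i => unop (b i), fun p => ?_⟩
  simp only [hR, hb, hlin, op_unop]

end Wedderburn

/-- **Left-right symmetry of Wedderburn polynomials.** For monic `f` of degree `n`,
`R·f` is an intersection of `n` left ideals `R·(t−aᵢ)` iff `f·R` is an intersection of
`n` right ideals `(t−bᵢ)·R`. -/
theorem stmt8 {K : Type*} [DivisionRing K] (f : K[X]) (hmonic : f.Monic) (n : ℕ)
    (hdeg : f.natDegree = n) :
    (∃ a : Fin n → K,
      {p : K[X] | ∃ q : K[X], p = q * f} =
        ⋂ i, {p : K[X] | ∃ q : K[X], p = q * (X - C (a i))}) ↔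
    (∃ b : Fin n → K,
      {p : K[X] | ∃ q : K[X], p = f * q} =
        ⋂ i, {p : K[X] | ∃ q : K[X], p = (X - C (b i)) * q}) := by
  simp only [Set.ext_iff, Set.mem_iInter, Set.mem_ofPred_eq]
  constructor
  · rintro ⟨a, ha⟩
    exact right_of_left f hmonic n hdeg a ha
  · rintro ⟨b, hb⟩
    exact left_of_right f hmonic n hdeg b hb
end

section
/- Let K be a division ring, R = K[t], and suppose f ∈ R is monic of degree n with R·f = R·(t−a_1) ∩ ⋯ ∩ R·(t−a_n) for a_1,…,a_n ∈ K. For each i, let h_i be the minimal polynomial of the algebraic set {a_1,…,a_n} ∖ {a_i}. Then h_i(a_i) ≠ 0, and setting b_i := h_i(a_i)·a_i·h_i(a_i)⁻¹ for 1 ≤ i ≤ n, one has f·R = ⋂_{i=1}^n (t−b_i)·R. -/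
/-!
A finite set of `m` points is annihilated by a monic polynomial of degree at most `m`, so
`deg hᵢ ≤ n - 1`. Hence `hᵢ(aᵢ) ≠ 0`, since otherwise `hᵢ` would be a left multiple of `f`.
As `(t - bᵢ) hᵢ` is monic of degree at most `n` and vanishes at every `aⱼ`, it equals `f`
(`eq_of_monic_left_multiple`), which gives `f R ⊆ ⋂ (t - bᵢ) R`.

For the reverse inclusion, the right ideal `⋂ (t - bᵢ) R` is principal, generated by some `g`
(`exists_right_generator`). Write `f = g u` and `g = (t - bᵢ) gᵢ`; cancelling `t - bᵢ` gives
`hᵢ = gᵢ u` for every `i`. Lagrange interpolation of the constant `1` expresses `1` as a left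
combination of the `hᵢ`, so `u` has a left inverse. In the domain `R` it is then a unit, and
`g R = f R`.
-/

open Polynomial

/-- Division with remainder on the right by `X - C a`. -/
lemma exists_mul_X_sub_C_add {K : Type*} [DivisionRing K] (a : K) (p : K[X]) :
    ∃ q : K[X], p = q * (X - C a) + C (p.eval a) := by
  induction p using Polynomial.induction_on' with
  | add p r hp hr =>
    obtain ⟨q, hq⟩ := hp
    obtain ⟨s, hs⟩ := hr
    refine ⟨q + s, ?_⟩
    rw [eval_add, C_add, add_mul]
    nth_rewrite 1 [hq, hs]
    abel
  | monomial n c =>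
    have hcomm : Commute (X : K[X]) (C a) := X_mul_C a
    refine ⟨C c * ∑ i ∈ Finset.range n, X ^ i * C a ^ (n - 1 - i), ?_⟩
    rw [mul_assoc, hcomm.geom_sum₂_mul, eval_monomial, C_mul, C_pow, mul_sub,
      C_mul_X_pow_eq_monomial]
    abel

lemma exists_eq_mul_X_sub_C_iff {K : Type*} [DivisionRing K] (a : K) (p : K[X]) :
    (∃ q : K[X], p = q * (X - C a)) ↔ p.eval a = 0 := by
  constructor
  · rintro ⟨q, rfl⟩
    exact eval_mul_X_sub_C a
  · intro hp
    obtain ⟨q, hq⟩ := exists_mul_X_sub_C_add a p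
    exact ⟨q, by simpa [hp] using hq⟩

lemma eval_X_sub_C_mul {K : Type*} [DivisionRing K] (a b : K) (p : K[X]) :
    ((X - C b) * p).eval a = p.eval a * a - b * p.eval a := by
  rw [sub_mul, eval_sub, X_mul, eval_mul_X, eval_C_mul]

lemma exists_monic_vanishing {K ι : Type*} [DivisionRing K] (a : ι → K) (s : Finset ι) :
    ∃ g : K[X], g.Monic ∧ g.natDegree ≤ s.card ∧ ∀ j ∈ s, g.eval (a j) = 0 := by
  classical
  induction s using Finset.induction_on with
  | empty => exact ⟨1, monic_one, by simp, by simp⟩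
  | insert i s his ih =>
    obtain ⟨g, hg, hd, hv⟩ := ih
    by_cases h0 : g.eval (a i) = 0
    · refine ⟨g, hg, hd.trans (Finset.card_le_card (Finset.subset_insert _ _)), ?_⟩
      intro j hj
      rcases Finset.mem_insert.1 hj with rfl | hj
      · exact h0
      · exact hv j hj
    · refine ⟨(X - C (g.eval (a i) * a i * (g.eval (a i))⁻¹)) * g,
        (monic_X_sub_C _).mul hg, ?_, ?_⟩
      · rw [(monic_X_sub_C _).natDegree_mul hg, natDegree_X_sub_C, Finset.card_insert_of_notMem his]
        omega
      · intro j hj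
        rw [eval_X_sub_C_mul]
        rcases Finset.mem_insert.1 hj with rfl | hj
        · rw [inv_mul_cancel_right₀ h0, sub_self]
        · simp [hv j hj]

lemma eq_of_monic_left_multiple {K : Type*} [DivisionRing K] {f p q : K[X]} (hf : f.Monic)
    (hp : p.Monic) (hd : p.natDegree ≤ f.natDegree) (h : p = q * f) : p = f := by
  have hq : q.Monic := hf.of_mul_monic_right (h ▸ hp)
  have := hq.natDegree_mul hf
  rw [← h] at this
  have hq1 : q = 1 := hq.natDegree_eq_zero.1 (by omega)
  rw [h, hq1, one_mul]

/-- Right ideals of `K[X]` containing a monic polynomial are principal; the set `I` is only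
required to be closed under subtraction and right multiplication. -/
lemma exists_right_generator {K : Type*} [DivisionRing K] (I : Set K[X])
    (hsub : ∀ p ∈ I, ∀ q ∈ I, p - q ∈ I) (hmul : ∀ p ∈ I, ∀ q, p * q ∈ I)
    {f : K[X]} (hf : f.Monic) (hfI : f ∈ I) :
    ∃ g ∈ I, ∀ p ∈ I, ∃ v, p = g * v := by
  classical
  have hex : ∃ d, ∃ g ∈ I, g.Monic ∧ g.natDegree = d := ⟨_, f, hfI, hf, rfl⟩
  obtain ⟨g, hgI, hg, hgd⟩ := Nat.find_spec hex
  refine ⟨g, hgI, fun p hp => ⟨p /ₘ g, ?_⟩⟩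
  have hdiv := modByMonic_add_div p g
  have hrI : p %ₘ g ∈ I := by
    rw [← eq_sub_iff_add_eq] at hdiv
    rw [hdiv]
    exact hsub _ hp _ (hmul _ hgI _)
  by_cases hr : p %ₘ g = 0
  · rw [hr, zero_add] at hdiv
    exact hdiv.symm
  · exfalso
    -- The remainder, made monic, would have smaller degree than `g`.
    have hlt : (p %ₘ g).natDegree < g.natDegree :=
      natDegree_lt_natDegree hr (degree_modByMonic_lt p hg)
    refine Nat.find_min hex (m := (p %ₘ g).natDegree) (hgd ▸ hlt)
      ⟨p %ₘ g * C (p %ₘ g).leadingCoeff⁻¹, hmul _ hrI _, monic_mul_leadingCoeff_inv hr, ?_⟩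
    rw [natDegree_mul_C (inv_ne_zero (leadingCoeff_ne_zero.2 hr))]

/-- If `R·f = ⋂ R·(t−aᵢ)` and `hᵢ` is the minimal polynomial of `{a₁,…,aₙ} ∖ {aᵢ}`,
then `hᵢ(aᵢ) ≠ 0` and, with `bᵢ := hᵢ(aᵢ)·aᵢ·hᵢ(aᵢ)⁻¹`, one has `f·R = ⋂ (t−bᵢ)·R`. -/
theorem stmt9 {K : Type*} [DivisionRing K] (f : K[X]) (hmonic : f.Monic) (n : ℕ)
    (hdeg : f.natDegree = n) (a : Fin n → K)
    (hleft : {p : K[X] | ∃ q : K[X], p = q * f} =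
      ⋂ i, {p : K[X] | ∃ q : K[X], p = q * (X - C (a i))})
    (h : Fin n → K[X])
    (hmin : ∀ i, IsMinPolyOf (a '' {j | j ≠ i}) (h i)) :
    (∀ i, (h i).eval (a i) ≠ 0) ∧
    {p : K[X] | ∃ q : K[X], p = f * q} =
      ⋂ i, {p : K[X] | ∃ q : K[X],
        p = (X - C ((h i).eval (a i) * a i * ((h i).eval (a i))⁻¹)) * q} := by
  classical
  have hf : ∀ p : K[X], (∃ q, p = q * f) ↔ ∀ i, p.eval (a i) = 0 := by
    intro p
    have := Set.ext_iff.1 hleft p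
    simpa only [Set.mem_iInter, Set.mem_ofPred_eq, exists_eq_mul_X_sub_C_iff] using this
  have hsmall : ∀ p : K[X], p.natDegree < n → (∀ i, p.eval (a i) = 0) → p = 0 := by
    intro p hp hv
    obtain ⟨q, rfl⟩ := (hf p).2 hv
    by_contra hne
    have := natDegree_mul (left_ne_zero_of_mul hne) hmonic.ne_zero
    omega
  have hoff : ∀ i j, j ≠ i → (h i).eval (a j) = 0 := fun i j hj =>
    ((hmin i).2 (h i)).2 ⟨1, (one_mul _).symm⟩ _ ⟨j, hj, rfl⟩
  have hhd : ∀ i, (h i).natDegree < n := by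
    intro i
    obtain ⟨g, hg, hd, hv⟩ := exists_monic_vanishing a (Finset.univ.erase i)
    obtain ⟨q, hq⟩ := ((hmin i).2 g).1 (by
      rintro _ ⟨j, hj, rfl⟩
      exact hv j (Finset.mem_erase.2 ⟨hj, Finset.mem_univ j⟩))
    rw [Finset.card_erase_of_mem (Finset.mem_univ i), Finset.card_fin] at hd
    have hne := hg.ne_zero
    rw [hq] at hne hd
    rw [natDegree_mul (left_ne_zero_of_mul hne) (hmin i).1.ne_zero] at hd
    have := i.pos
    omega
  have hne : ∀ i, (h i).eval (a i) ≠ 0 := by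
    intro i h0
    refine (hmin i).1.ne_zero (hsmall _ (hhd i) fun j => ?_)
    by_cases hj : j = i
    · rw [hj, h0]
    · exact hoff i j hj
  refine ⟨hne, ?_⟩
  set b : Fin n → K := fun i => (h i).eval (a i) * a i * ((h i).eval (a i))⁻¹ with hb
  have hfac : ∀ i, f = (X - C (b i)) * h i := by
    intro i
    obtain ⟨q, hq⟩ := (hf ((X - C (b i)) * h i)).2 (by
      intro j
      rw [eval_X_sub_C_mul]
      by_cases hj : j = i
      · rw [hj, hb, inv_mul_cancel_right₀ (hne i), sub_self]
      · simp [hoff i j hj])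
    refine (eq_of_monic_left_multiple hmonic ((monic_X_sub_C _).mul (hmin i).1) ?_ hq).symm
    rw [(monic_X_sub_C _).natDegree_mul (hmin i).1, natDegree_X_sub_C]
    have := hhd i
    omega
  -- Lagrange interpolation of the constant `1`; for `n = 0` one has `f = 1` instead.
  have hone : n = 0 ∨ ∑ i, C ((h i).eval (a i))⁻¹ * h i = 1 := by
    rcases Nat.eq_zero_or_pos n with h0 | hpos
    · exact Or.inl h0
    · right
      rw [← sub_eq_zero]
      refine hsmall _ ?_ fun j => ?_
      · refine lt_of_le_of_lt (natDegree_sub_le_of_le (m := n - 1) (n := 0)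
          (natDegree_sum_le_of_forall_le _ _ fun i _ => ?_) (by simp)) (by simpa using hpos)
        have := natDegree_C_mul_le ((h i).eval (a i))⁻¹ (h i)
        have := hhd i
        omega
      · rw [eval_sub, eval_finsetSum, Finset.sum_eq_single j, eval_C_mul,
          inv_mul_cancel₀ (hne j), eval_one, sub_self]
        · intro i _ hij
          rw [eval_C_mul, hoff i j hij.symm, mul_zero]
        · simp
  apply Set.Subset.antisymm
  · rintro _ ⟨q, rfl⟩
    refine Set.mem_iInter.2 fun i => ⟨h i * q, ?_⟩
    rw [← mul_assoc]
    exact congrArg (· * q) (hfac i)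
  · intro p hp
    rcases hone with h0 | hone
    · exact ⟨p, by rw [hmonic.natDegree_eq_zero.1 (hdeg.trans h0), one_mul]⟩
    obtain ⟨g, hgI, hg⟩ := exists_right_generator
      (⋂ i, {p : K[X] | ∃ q : K[X], p = (X - C (b i)) * q})
      (by
        intro p hp q hq
        refine Set.mem_iInter.2 fun i => ?_
        obtain ⟨r, hr⟩ := Set.mem_iInter.1 hp i
        obtain ⟨s, hs⟩ := Set.mem_iInter.1 hq i
        exact ⟨r - s, by rw [hr, hs, mul_sub]⟩)
      (by
        intro p hp q
        refine Set.mem_iInter.2 fun i => ?_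
        obtain ⟨r, hr⟩ := Set.mem_iInter.1 hp i
        exact ⟨r * q, by rw [hr, mul_assoc]⟩)
      hmonic (Set.mem_iInter.2 fun i => ⟨h i, hfac i⟩)
    obtain ⟨v, hv⟩ := hg p hp
    obtain ⟨u, hu⟩ := hg f (Set.mem_iInter.2 fun i => ⟨h i, hfac i⟩)
    choose k hk using fun i => Set.mem_iInter.1 hgI i
    have hku : ∀ i, h i = k i * u := by
      intro i
      apply mul_left_cancel₀ (X_sub_C_ne_zero (b i))
      rw [← hfac i, ← mul_assoc, ← hk i, hu]
    obtain ⟨w, hw⟩ : ∃ w, w * u = 1 := by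
      refine ⟨∑ i, C ((h i).eval (a i))⁻¹ * k i, ?_⟩
      rw [Finset.sum_mul, ← hone]
      refine Finset.sum_congr rfl fun i _ => ?_
      rw [mul_assoc, ← hku i]
    have hw' : u * w = 1 := mul_eq_one_symm hw
    exact ⟨w * v, by rw [hv, hu, mul_assoc, ← mul_assoc u, hw', one_mul]⟩
end

section
/- Let K be a division ring, R = K[t], and let f ∈ R be monic. Then f is a Wedderburn polynomial if and only if for every q ∈ R, V'(f) ⊆ V'(q) implies q ∈ f·R. -/
/-!
Both conditions say that `f` generates the intersection of the one-sided ideals generated by its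
linear factors: `R f = ⋂ R (t - a)` over the linear right factors (`IsLeftW`), respectively
`f R = ⋂ (t - b) R` over the linear left factors (`IsRightW`). Passing to the opposite ring
exchanges the two, so one implication, `IsLeftW.isRightW`, is enough.

Let `R f = ⋂ R (t - a)`, let `m` be the monic generator of the right ideal `⋂ (t - b) R`, and write
`f = m c`. Cancelling `t - b` in `f = (t - b) g = m c` shows that `c` right-divides every
cofactor `g` of a linear left factor of `f`. The main step (`mem_of_cofactors_mem`) is that
`c` then right-divides every monic right factor `g` of `f = h g`, by induction on `deg h`: if
`g ∉ R c`, then some `a ∈ V(f)` has `g(a) ≠ 0`, and `g' = (t - b) g` with `b = g(a) a g(a)⁻¹`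
is a right factor of `f` vanishing at `a`, so `g' ∈ R c` by induction. Any other such `a` has the
same `b`, as otherwise the difference `(b - b') g` of two such multiples would put `g` in `R c`.
So `g'` vanishes on `V(f)`, thus `g' = f`, and `g` is the cofactor of a linear left factor,
hence lies in `R c` after all. Taking `g = 1` gives `c = 1` and `f = m`.
-/

open Polynomial

/-- The left root set `V'(f) = {b ∈ K : f ∈ (t−b)·R}`. -/
def leftRootSet {K : Type*} [DivisionRing K] (f : K[X]) : Set K :=
  {b : K | ∃ p : K[X], f = (X - C b) * p}

/-- `R f` is the intersection of the left ideals `R (t - a)` containing `f`. -/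
def IsLeftW {K : Type*} [DivisionRing K] (f : K[X]) : Prop :=
  ∀ q : K[X], (∀ a : K, (∃ p, f = p * (X - C a)) → ∃ p, q = p * (X - C a)) → ∃ p, q = p * f

/-- `f R` is the intersection of the right ideals `(t - b) R` containing `f`. -/
def IsRightW {K : Type*} [DivisionRing K] (f : K[X]) : Prop :=
  ∀ q : K[X], (∀ b : K, (∃ p, f = (X - C b) * p) → ∃ p, q = (X - C b) * p) → ∃ p, q = f * p

section

variable {K : Type*} [DivisionRing K]

/-- The remainder theorem, for division by `t - a` on the right. -/
lemma exists_eq_mul_X_sub_C_add_s10 (g : K[X]) (a : K) :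
    ∃ p : K[X], g = p * (X - C a) + C (g.eval a) := by
  induction g using Polynomial.induction_on' with
  | add p q hp hq =>
    obtain ⟨p', hp⟩ := hp
    obtain ⟨q', hq⟩ := hq
    refine ⟨p' + q', ?_⟩
    rw [eval_add, C_add, add_mul]
    nth_rewrite 1 [hp, hq]
    abel
  | monomial n r =>
    refine ⟨C r * ∑ i ∈ Finset.range n, X ^ i * (C a) ^ (n - 1 - i), ?_⟩
    have h := (commute_X (C a)).geom_sum₂_mul n
    rw [mul_assoc, h, eval_monomial, ← C_mul_X_pow_eq_monomial, C_mul, C_pow, mul_sub]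
    abel

lemma eval_eq_zero_iff_exists (g : K[X]) (a : K) :
    g.eval a = 0 ↔ ∃ p : K[X], g = p * (X - C a) := by
  constructor
  · intro h
    obtain ⟨p, hp⟩ := exists_eq_mul_X_sub_C_add_s10 g a
    exact ⟨p, by simpa [h] using hp⟩
  · rintro ⟨p, rfl⟩
    exact eval_mul_X_sub_C a

lemma X_sub_C_conj_mul_C (a r : K) (hr : r ≠ 0) :
    (X - C (r * a * r⁻¹)) * C r = C r * (X - C a) := by
  rw [sub_mul, mul_sub, X_mul_C, ← C_mul, ← C_mul, inv_mul_cancel_right₀ hr]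

/-- If `g(a) ≠ 0` then `(t - b) g`, with `b` the conjugate of `a` by `g(a)`, generates the left
ideal `R g ∩ R (t - a)`. -/
lemma exists_lclm (g : K[X]) (a : K) (hga : g.eval a ≠ 0) :
    ∃ b : K, ((X - C b) * g).eval a = 0 ∧
      ∀ h : K[X], (h * g).eval a = 0 → ∃ k, h = k * (X - C b) := by
  obtain ⟨p, hp⟩ := exists_eq_mul_X_sub_C_add_s10 g a
  generalize g.eval a = r at hp hga
  refine ⟨r * a * r⁻¹, ?_, fun h hh => ?_⟩
  · rw [eval_eq_zero_iff_exists]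
    refine ⟨(X - C (r * a * r⁻¹)) * p + C r, ?_⟩
    rw [hp, mul_add, X_sub_C_conj_mul_C a r hga, add_mul, ← mul_assoc]
  · obtain ⟨s, hs⟩ := (eval_eq_zero_iff_exists _ _).1 hh
    refine ⟨(s - h * p) * C r⁻¹, ?_⟩
    have h1 : h * C r = (s - h * p) * (X - C a) := by
      rw [sub_mul, ← hs]
      rw [hp, mul_add, mul_assoc]
      abel
    have h2 : C r * C r⁻¹ = (1 : K[X]) := by rw [← C_mul, mul_inv_cancel₀ hga, C_1]
    have h3 : C r⁻¹ * C r = (1 : K[X]) := by rw [← C_mul, inv_mul_cancel₀ hga, C_1]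
    have h4 : C r⁻¹ * (X - C (r * a * r⁻¹)) = (X - C a) * C r⁻¹ := by
      calc C r⁻¹ * (X - C (r * a * r⁻¹))
          = C r⁻¹ * ((X - C (r * a * r⁻¹)) * C r) * C r⁻¹ := by
            rw [mul_assoc (C r⁻¹), mul_assoc _ (C r), h2, mul_one]
        _ = (X - C a) * C r⁻¹ := by
            rw [X_sub_C_conj_mul_C a r hga, ← mul_assoc, h3, one_mul]
    rw [mul_assoc, h4, ← mul_assoc, ← h1, mul_assoc, h2, mul_one]

lemma eq_one_of_mul_eq_one_of_monic {w k : K[X]} (hk : k.Monic) (h : w * k = 1) : k = 1 := by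
  have hw : w ≠ 0 := by
    rintro rfl
    simp at h
  have hd := natDegree_mul hw hk.ne_zero
  rw [h, natDegree_one] at hd
  exact hk.natDegree_eq_zero.1 (by omega)

/-- If the left ideal `R c` contains `f` and every cofactor of a linear left factor of `f`, then it
contains every monic right factor of `f`. -/
lemma mem_of_cofactors_mem {f c : K[X]} (hf : f.Monic) (hW : IsLeftW f) (hfc : ∃ u, f = u * c)
    (hc : ∀ (b : K) (g : K[X]), f = (X - C b) * g → ∃ u, g = u * c) (n : ℕ) :
    ∀ g h : K[X], g.Monic → f = h * g → h.natDegree = n → ∃ u, g = u * c := by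
  induction n using Nat.strong_induction_on with
  | _ n ih =>
    intro g h hg hfg hn
    by_contra hgc
    have hmul : ∀ a : K, f.eval a = 0 → g.eval a ≠ 0 → ∃ b k : K[X], ∃ b' : K, b = X - C b' ∧
        (b * g).eval a = 0 ∧ h = k * b ∧ ∃ u, b * g = u * c := by
      intro a hfa hga
      obtain ⟨b, hb, hb'⟩ := exists_lclm g a hga
      obtain ⟨k, hk⟩ := hb' h (hfg ▸ hfa)
      refine ⟨X - C b, k, b, rfl, hb, hk, ?_⟩
      refine ih k.natDegree ?_ _ k ((monic_X_sub_C b).mul hg) (by rw [hfg, hk, mul_assoc]) rfl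
      have hk0 : k ≠ 0 := by
        rintro rfl
        rw [hfg, hk] at hf
        simp at hf
      rw [← hn, hk, natDegree_mul hk0 (X_sub_C_ne_zero b), natDegree_X_sub_C]
      omega
    obtain ⟨a, hfa, hga⟩ : ∃ a, f.eval a = 0 ∧ g.eval a ≠ 0 := by
      by_contra! hcon
      obtain ⟨u, hu⟩ := hW g fun a ha => by
        rw [← eval_eq_zero_iff_exists] at ha ⊢
        exact hcon a ha
      obtain ⟨v, hv⟩ := hfc
      exact hgc ⟨u * v, by rw [hu, hv, mul_assoc]⟩
    obtain ⟨_, k, b, rfl, -, hk, u, hu⟩ := hmul a hfa hga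
    obtain ⟨w, hw⟩ := hW ((X - C b) * g) fun a' ha' => by
      rw [← eval_eq_zero_iff_exists] at ha' ⊢
      by_cases hga' : g.eval a' = 0
      · obtain ⟨p, hp⟩ := (eval_eq_zero_iff_exists _ _).1 hga'
        exact (eval_eq_zero_iff_exists _ _).2 ⟨(X - C b) * p, by rw [mul_assoc, ← hp]⟩
      · obtain ⟨_, k', b', rfl, h0, -, u', hu'⟩ := hmul a' ha' hga'
        obtain rfl : b = b' := by
          by_contra hne
          refine hgc ⟨C (b' - b)⁻¹ * (u - u'), ?_⟩
          have hd : C (b' - b) * g = (u - u') * c := by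
            rw [sub_mul, ← hu, ← hu', ← sub_mul, C_sub]
            congr 1
            abel
          rw [mul_assoc, ← hd, ← mul_assoc, ← C_mul,
            inv_mul_cancel₀ (sub_ne_zero.2 (Ne.symm hne)), C_1, one_mul]
        exact h0
    have hg' : ((X - C b) * g).Monic := (monic_X_sub_C b).mul hg
    have hfk : f = k * ((X - C b) * g) := by rw [hfg, hk, mul_assoc]
    have hwk : w * k = 1 := by
      apply mul_right_cancel₀ hg'.ne_zero
      rw [mul_assoc, ← hfk, ← hw, one_mul]
    have hkm : k.Monic := hg'.of_mul_monic_right (hfk ▸ hf)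
    rw [eq_one_of_mul_eq_one_of_monic hkm hwk, one_mul] at hfk
    exact hgc (hc b g hfk)

lemma IsLeftW.isRightW {f : K[X]} (hf : f.Monic) (hW : IsLeftW f) : IsRightW f := by
  -- `m` is a monic element of least degree of the right ideal `⋂ (t - b) R`.
  let I : Set K[X] := {p | ∀ b : K, (∃ s, f = (X - C b) * s) → ∃ s, p = (X - C b) * s}
  have hex : ∃ n : ℕ, ∃ m ∈ I, m.Monic ∧ m.natDegree = n := ⟨_, f, fun _ h => h, hf, rfl⟩
  classical
  obtain ⟨m, hmI, hm, hmn⟩ := Nat.find_spec hex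
  have hgen : ∀ q ∈ I, q = m * (q /ₘ m) := by
    intro q hq
    have hdiv := modByMonic_add_div q m
    have hrI : q %ₘ m ∈ I := by
      intro b hb
      obtain ⟨s, hs⟩ := hq b hb
      obtain ⟨s', hs'⟩ := hmI b hb
      refine ⟨s - s' * (q /ₘ m), ?_⟩
      rw [mul_sub, ← hs, ← mul_assoc, ← hs']
      exact eq_sub_of_add_eq hdiv
    by_cases hr : q %ₘ m = 0
    · rw [hr, zero_add] at hdiv
      exact hdiv.symm
    · exfalso
      have hlt := natDegree_lt_natDegree hr (degree_modByMonic_lt q hm)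
      rw [hmn] at hlt
      refine Nat.find_min hex hlt
        ⟨q %ₘ m * C (q %ₘ m).leadingCoeff⁻¹, ?_, monic_mul_leadingCoeff_inv hr, ?_⟩
      · intro b hb
        obtain ⟨s, hs⟩ := hrI b hb
        exact ⟨s * C (q %ₘ m).leadingCoeff⁻¹, by rw [← mul_assoc, ← hs]⟩
      · exact natDegree_mul_leadingCoeff_inv _ hr
  obtain ⟨c, hc⟩ : ∃ c, f = m * c := ⟨_, hgen f fun _ h => h⟩
  obtain ⟨u, hu⟩ := mem_of_cofactors_mem hf hW ⟨m, hc⟩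
    (fun b g hg => by
      obtain ⟨p, hp⟩ := hmI b ⟨g, hg⟩
      refine ⟨p, mul_left_cancel₀ (X_sub_C_ne_zero b) ?_⟩
      rw [← hg, ← mul_assoc, ← hp, hc]) _ 1 f monic_one (mul_one f).symm rfl
  have hc1 : c = 1 :=
    eq_one_of_mul_eq_one_of_monic (hm.of_mul_monic_left (hc ▸ hf)) hu.symm
  rw [hc1, mul_one] at hc
  intro q hq
  exact ⟨_, hc ▸ hgen q hq⟩

end

open MulOpposite in
lemma IsRightW.isLeftW {K : Type*} [DivisionRing K] {f : K[X]} (hf : f.Monic) (hW : IsRightW f) :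
    IsLeftW f := by
  let e := opRingEquiv K
  have heX : ∀ a : K, e (op (X - C a)) = X - C (op a) := fun a => by simp [e]
  -- `e` turns left multiples into right multiples.
  have key : ∀ q d : K[X], (∃ p, q = p * d) ↔ ∃ p, e (op q) = e (op d) * p := by
    intro q d
    constructor
    · rintro ⟨p, rfl⟩
      exact ⟨e (op p), by rw [op_mul, map_mul]⟩
    · rintro ⟨p, hp⟩
      refine ⟨(e.symm p).unop, op_injective (e.injective ?_)⟩
      rw [hp, op_mul, map_mul, op_unop, RingEquiv.apply_symm_apply]
  have key' : ∀ q d : K[X], (∃ p, q = d * p) ↔ ∃ p, e (op q) = p * e (op d) := by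
    intro q d
    constructor
    · rintro ⟨p, rfl⟩
      exact ⟨e (op p), by rw [op_mul, map_mul]⟩
    · rintro ⟨p, hp⟩
      refine ⟨(e.symm p).unop, op_injective (e.injective ?_)⟩
      rw [hp, op_mul, map_mul, op_unop, RingEquiv.apply_symm_apply]
  have hef : (e (op f)).Monic := by
    rw [Monic, leadingCoeff_opRingEquiv, unop_op, hf.leadingCoeff, op_one]
  have hL : IsLeftW (e (op f)) := by
    intro q hq
    obtain ⟨q, rfl⟩ : ∃ q', q = e (op q') := ⟨(e.symm q).unop, by simp⟩
    rw [← key']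
    refine hW q fun b hb => ?_
    rw [key', heX] at hb ⊢
    exact hq _ hb
  intro q hq
  rw [key]
  refine hL.isRightW hef _ fun b hb => ?_
  have := hq b.unop
  rw [key, key, heX, op_unop] at this
  exact this hb

lemma isWPoly_iff_isLeftW {K : Type*} [DivisionRing K] {f : K[X]} (hf : f.Monic) :
    IsWPoly f ↔ IsLeftW f := by
  constructor
  · intro h q hq
    refine (h.2 q).1 fun a ha => ?_
    rw [eval_eq_zero_iff_exists]
    exact hq a ((eval_eq_zero_iff_exists f a).1 ha)
  · intro h
    refine ⟨hf, fun g => ⟨fun hg => h g fun a ha => ?_, ?_⟩⟩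
    · rw [← eval_eq_zero_iff_exists] at ha ⊢
      exact hg a ha
    · rintro ⟨q, rfl⟩ a ha
      obtain ⟨p, hp⟩ := (eval_eq_zero_iff_exists f a).1 ha
      exact (eval_eq_zero_iff_exists _ a).2 ⟨q * p, by rw [mul_assoc, ← hp]⟩

/-- A monic `f` is a W-polynomial iff for all `q`, `V'(f) ⊆ V'(q)` implies `q ∈ f·R`. -/
theorem stmt10 {K : Type*} [DivisionRing K] (f : K[X]) (hmonic : f.Monic) :
    IsWPoly f ↔
      ∀ q : K[X], leftRootSet f ⊆ leftRootSet q → ∃ p : K[X], q = f * p := by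
  rw [isWPoly_iff_isLeftW hmonic]
  exact ⟨fun h => h.isRightW hmonic, fun h => IsRightW.isLeftW hmonic h⟩
end

section
/- (Second Rank Theorem) Let K be a division ring and R = K[t]. Let h ∈ R and let Δ ⊆ K be an algebraic set with Δ ∩ V(h) = ∅. Then the image Φ_h(Δ) = {h(x)·x·h(x)⁻¹ : x ∈ Δ} is an algebraic set and rk(Φ_h(Δ)) = rk(Δ) − rk(Δ̄ ∩ V(h)). In particular, rk(Φ_h(Δ)) = rk(Δ) if and only if Δ̄ ∩ V(h) = ∅. -/
/-!
Everything is phrased through left ideals of `R = K[X]`. Write `f = fΔ`. The product formula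
`(g * h)(x) = g (Φ_h x) * h(x)` shows that `g` vanishes on `Φ_h(Δ)` iff `g * h ∈ R f`, so the
ideal of `Φ_h(Δ)` is the kernel of `R → R / R f`, `g ↦ g * h`; it is nonzero because `R / R f`
has finite `K`-dimension `deg f`.

The key point (`mem_span_of_vanish`) is that a right factor `d` of a minimal polynomial `f`
generates the ideal of its own zero set. The reason is that `R / R f` is semisimple, so `R d / R f`
has a complement; projecting `1` to it gives `u` with `g * u ∈ R f ↔ g ∈ R d`
(`exists_annihilated`). If `g` vanishes on `V(d)`, the product formula gives that `g * u` vanishes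
on `Δ`, whence `g ∈ R d`.

Applied to the generator `d` of `R f + R h`, this gives `R f + R h = R fI`. Cancelling `fI` from
`f = p * fI` and `h = h' * fI`, the elements `p` and `h'` generate `R` as a left ideal and the ideal
of `Φ_h(Δ)` is the kernel of the surjection `R → R / R p`, `g ↦ g * h'`. Comparing `K`-dimensions,
`rk Φ_h(Δ) = deg p = deg f - deg fI`.
-/

open Polynomial

/-- Product formula at a point where the right factor does not vanish. -/
lemma eval_mul_of_ne {K : Type*} [DivisionRing K] (g h : K[X]) (x : K) (hx : h.eval x ≠ 0) :
    (g * h).eval x = g.eval (h.eval x * x * (h.eval x)⁻¹) * h.eval x := by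
  have key : ∀ n : ℕ, (h.eval x * x * (h.eval x)⁻¹) ^ n * h.eval x = h.eval x * x ^ n := by
    intro n
    induction n with
    | zero => simp
    | succ n ih =>
      rw [pow_succ, mul_assoc, inv_mul_cancel_right₀ hx, ← mul_assoc, ih, pow_succ, mul_assoc]
  induction g using Polynomial.induction_on' with
  | add p q hp hq => rw [add_mul, eval_add, hp, hq, eval_add, add_mul]
  | monomial n a =>
    rw [← C_mul_X_pow_eq_monomial, mul_assoc, eval_C_mul, X_pow_mul, eval_mul_X_pow, eval_C_mul,
      eval_X_pow, mul_assoc, key]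

lemma eval_mul_of_eq {K : Type*} [DivisionRing K] (g h : K[X]) (x : K) (hx : h.eval x = 0) :
    (g * h).eval x = 0 := by
  induction g using Polynomial.induction_on' with
  | add p q hp hq => rw [add_mul, eval_add, hp, hq, add_zero]
  | monomial n a =>
    rw [← C_mul_X_pow_eq_monomial, mul_assoc, eval_C_mul, X_pow_mul, eval_mul_X_pow, hx]
    simp

/-- Right division with remainder: Mathlib's `%ₘ` puts the divisor on the other side. -/
lemma exists_right_div {K : Type*} [DivisionRing K] (f : K[X]) (hf : f ≠ 0) (g : K[X]) :
    ∃ q r : K[X], g = q * f + r ∧ r.degree < f.degree := by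
  induction hn : g.degree using WellFoundedLT.induction generalizing g with
  | ind n ih =>
    by_cases hlt : g.degree < f.degree
    · exact ⟨0, g, by simp, hlt⟩
    · have hg : g ≠ 0 := by
        rintro rfl
        exact hlt (by simpa [bot_lt_iff_ne_bot] using hf)
      have hle : f.natDegree ≤ g.natDegree := natDegree_le_natDegree (not_lt.mp hlt)
      have hlf : f.leadingCoeff ≠ 0 := leadingCoeff_ne_zero.mpr hf
      have hlg : g.leadingCoeff ≠ 0 := leadingCoeff_ne_zero.mpr hg
      set m : K[X] := C (g.leadingCoeff * f.leadingCoeff⁻¹) * X ^ (g.natDegree - f.natDegree)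
        with hm
      have hmd : m.degree = ((g.natDegree - f.natDegree : ℕ) : WithBot ℕ) :=
        degree_C_mul_X_pow _ (by simp [hlf, hlg])
      have hml : m.leadingCoeff = g.leadingCoeff * f.leadingCoeff⁻¹ :=
        leadingCoeff_C_mul_X_pow _ _
      have hlt' : (g - m * f).degree < g.degree := by
        apply degree_sub_lt_left
        · rw [degree_mul, hmd, degree_eq_natDegree hf, degree_eq_natDegree hg, ← Nat.cast_add,
            Nat.sub_add_cancel hle]
        · exact hg
        · rw [leadingCoeff_mul, hml, inv_mul_cancel_right₀ hlf]
      obtain ⟨q, r, hqr, hr⟩ := ih _ (hn ▸ hlt') _ rfl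
      refine ⟨m + q, r, ?_, hr⟩
      rw [add_mul, add_assoc, ← hqr]
      abel

lemma exists_monic_generator {K : Type*} [DivisionRing K] (I : Ideal K[X]) (hI : I ≠ ⊥) :
    ∃ f : K[X], f.Monic ∧ I = Ideal.span {f} := by
  obtain ⟨g, hgI, hg⟩ := Submodule.exists_mem_ne_zero_of_ne_bot hI
  obtain ⟨f, ⟨hfI, hf⟩, hmin⟩ :=
    exists_minimalFor_of_wellFoundedLT (fun f : K[X] => f ∈ I ∧ f ≠ 0) degree ⟨g, hgI, hg⟩
  have hlf : f.leadingCoeff ≠ 0 := leadingCoeff_ne_zero.mpr hf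
  refine ⟨C f.leadingCoeff⁻¹ * f, ?_, ?_⟩
  · rw [Monic, leadingCoeff_mul, leadingCoeff_C, inv_mul_cancel₀ hlf]
  · apply le_antisymm
    · intro x hx
      obtain ⟨q, r, hqr, hr⟩ := exists_right_div f hf x
      have hrI : r ∈ I := by
        have : r = x - q * f := by rw [hqr]; abel
        rw [this]
        exact I.sub_mem hx (I.mul_mem_left q hfI)
      have hr0 : r = 0 := by
        by_contra hne
        exact absurd (hmin ⟨hrI, hne⟩ hr.le) (not_le.mpr hr)
      rw [Ideal.mem_span_singleton']
      refine ⟨q * C f.leadingCoeff, ?_⟩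
      rw [hqr, hr0, add_zero, mul_assoc, ← mul_assoc (C _) (C _), ← C_mul, mul_inv_cancel₀ hlf,
        C_1, one_mul]
    · rw [Ideal.span_singleton_le_iff_mem]
      exact I.mul_mem_left _ hfI

/-- Residues modulo `R p` are represented by the polynomials of degree less than `deg p`. -/
lemma exists_degreeLT_equiv {K : Type*} [DivisionRing K] (p : K[X]) (hp : p ≠ 0) :
    Nonempty (degreeLT K p.natDegree ≃ₗ[K] (K[X] ⧸ Ideal.span {p})) := by
  refine ⟨LinearEquiv.ofBijective
    (((Ideal.span {p}).mkQ.restrictScalars K).comp (degreeLT K p.natDegree).subtype) ⟨?_, ?_⟩⟩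
  · rw [← LinearMap.ker_eq_bot, LinearMap.ker_eq_bot']
    rintro ⟨x, hx⟩ h0
    have h1 : x ∈ Ideal.span {p} := by simpa using h0
    obtain ⟨q, rfl⟩ := Ideal.mem_span_singleton'.mp h1
    rw [mem_degreeLT, ← degree_eq_natDegree hp] at hx
    have hq : q = 0 := by
      by_contra hq
      rw [degree_mul, degree_eq_natDegree hp, degree_eq_natDegree hq] at hx
      norm_cast at hx
      omega
    simp [hq]
  · intro y
    obtain ⟨x, rfl⟩ := Submodule.mkQ_surjective _ y
    obtain ⟨q, r, hqr, hr⟩ := exists_right_div p hp x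
    refine ⟨⟨r, ?_⟩, ?_⟩
    · rwa [mem_degreeLT, ← degree_eq_natDegree hp]
    · change Submodule.Quotient.mk r = Submodule.Quotient.mk x
      rw [eq_comm, Submodule.Quotient.eq, hqr, add_sub_cancel_right]
      exact Ideal.mul_mem_left _ q (Ideal.mem_span_singleton_self p)

lemma finite_quot {K : Type*} [DivisionRing K] (p : K[X]) (hp : p ≠ 0) :
    Module.Finite K (K[X] ⧸ Ideal.span {p}) := by
  obtain ⟨e⟩ := exists_degreeLT_equiv p hp
  exact Module.Finite.equiv ((degreeLTEquiv K p.natDegree).symm.trans e)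

lemma finrank_quot {K : Type*} [DivisionRing K] (p : K[X]) (hp : p ≠ 0) :
    Module.finrank K (K[X] ⧸ Ideal.span {p}) = p.natDegree := by
  obtain ⟨e⟩ := exists_degreeLT_equiv p hp
  rw [← ((degreeLTEquiv K p.natDegree).symm.trans e).finrank_eq]
  simp

/-- The map `g ↦ g * h` from `R` to `R / R p`; its kernel is the left ideal `{g : g * h ∈ R p}`. -/
noncomputable def colonMap {K : Type*} [DivisionRing K] (p h : K[X]) : K[X] →ₗ[K[X]] (K[X] ⧸ Ideal.span {p}) :=
  LinearMap.toSpanSingleton K[X] _ (Submodule.Quotient.mk h)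

lemma mem_ker_colonMap {K : Type*} [DivisionRing K] (p h g : K[X]) :
    g ∈ LinearMap.ker (colonMap p h) ↔ g * h ∈ Ideal.span {p} := by
  rw [LinearMap.mem_ker, colonMap, LinearMap.toSpanSingleton_apply, ← Submodule.Quotient.mk_smul,
    Submodule.Quotient.mk_eq_zero, smul_eq_mul]

/-- `R` is infinite-dimensional over `K` while `R / R p` is not. -/
lemma ker_colonMap_ne_bot {K : Type*} [DivisionRing K] (p h : K[X]) (hp : p ≠ 0) :
    LinearMap.ker (colonMap p h) ≠ ⊥ := by
  intro hbot
  have hinj : Function.Injective ((colonMap p h).restrictScalars K) :=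
    (LinearMap.ker_eq_bot.mp hbot : Function.Injective (colonMap p h))
  have := finite_quot p hp
  exact Polynomial.not_finite (Module.Finite.of_injective _ hinj)

/-- Complementing `R d / R f` in `R / R f`: the element `u` is the projection of `1`. The
complement `N` is found as a left ideal `R n ⊇ R f` with `R d + R n = R` and `deg n` maximal; if
some `w ∈ R d ∩ R n` did not vanish at `a ∈ Δ`, then `N` could be shrunk to `N ∩ R (X - a)`. -/
lemma exists_annihilated {K : Type*} [DivisionRing K] (Δ : Set K) (f d : K[X])
    (hf : IsMinPolyOf Δ f) (hd : f ∈ Ideal.span {d}) :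
    ∃ u : K[X], ∀ g : K[X], g * u ∈ Ideal.span {f} ↔ g ∈ Ideal.span {d} := by
  have hf0 : f ≠ 0 := hf.1.ne_zero
  let S : Set K[X] := {n | f ∈ Ideal.span {n} ∧ Ideal.span {d} ⊔ Ideal.span {n} = ⊤}
  have hbound : ∀ n ∈ S, n.natDegree ≤ f.natDegree := by
    rintro n ⟨hn, -⟩
    obtain ⟨q, rfl⟩ := Ideal.mem_span_singleton'.mp hn
    rw [natDegree_mul (left_ne_zero_of_mul hf0) (right_ne_zero_of_mul hf0)]
    omega
  have h1 : (1 : K[X]) ∈ S := by simp [S]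
  -- Minimal codegree is maximal degree, as degrees in `S` are bounded by `deg f`.
  obtain ⟨n, hnS, hmin⟩ := exists_minimalFor_of_wellFoundedLT (fun n : K[X] => n ∈ S)
    (fun n => f.natDegree - n.natDegree) ⟨1, h1⟩
  have hcap : ∀ w, w ∈ Ideal.span {d} → w ∈ Ideal.span {n} → w ∈ Ideal.span {f} := by
    intro w hwd hwn
    have hw : ∀ a ∈ Δ, w.eval a = 0 := by
      intro a ha
      by_contra hwa
      -- `N` consists of the elements of `R n` vanishing at `a`.
      let N : Ideal K[X] :=
        { carrier := {g | g ∈ Ideal.span {n} ∧ g.eval a = 0}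
          add_mem' := fun {x y} hx hy => ⟨Ideal.add_mem _ hx.1 hy.1, by simp [hx.2, hy.2]⟩
          zero_mem' := ⟨Ideal.zero_mem _, by simp⟩
          smul_mem' := fun c x hx => ⟨Ideal.mul_mem_left _ c hx.1, eval_mul_of_eq c x a hx.2⟩ }
      have hfN : f ∈ N := ⟨hnS.1, (hf.2 f).mpr ⟨1, by simp⟩ a ha⟩
      obtain ⟨n', hn', hN⟩ := exists_monic_generator N
        (fun hb => hf0 (by rw [hb] at hfN; simpa using hfN))
      have hn'S : n' ∈ S := by
        refine ⟨hN ▸ hfN, ?_⟩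
        rw [← hN, eq_top_iff, ← hnS.2]
        refine sup_le le_sup_left ?_
        intro g hg
        have hsplit : g = C (g.eval a * (w.eval a)⁻¹) * w
            + (g - C (g.eval a * (w.eval a)⁻¹) * w) := by abel
        rw [hsplit]
        refine Submodule.add_mem_sup (Ideal.mul_mem_left _ _ hwd)
          ⟨Ideal.sub_mem _ hg (Ideal.mul_mem_left _ _ hwn), ?_⟩
        rw [eval_sub, eval_C_mul, inv_mul_cancel_right₀ hwa, sub_self]
      have hn'n : n' ∈ N := hN ▸ Ideal.mem_span_singleton_self n'
      obtain ⟨q, hq⟩ := Ideal.mem_span_singleton'.mp hn'n.1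
      have hne : q * n ≠ 0 := hq ▸ hn'.ne_zero
      have hdeg : n'.natDegree = q.natDegree + n.natDegree := by
        rw [← hq, natDegree_mul (left_ne_zero_of_mul hne) (right_ne_zero_of_mul hne)]
      have hq0 : q.natDegree = 0 := by
        have h2 : f.natDegree - n.natDegree ≤ f.natDegree - n'.natDegree :=
          hmin hn'S (Nat.sub_le_sub_left (by omega) _)
        have h3 := hbound n' hn'S
        omega
      obtain ⟨c, rfl⟩ := natDegree_eq_zero.mp hq0
      have hc : c ≠ 0 := by
        rintro rfl
        simp at hne
      have hna : n.eval a = 0 := by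
        have := hn'n.2
        rw [← hq, eval_C_mul] at this
        exact (mul_eq_zero.mp this).resolve_left hc
      obtain ⟨s, rfl⟩ := Ideal.mem_span_singleton'.mp hwn
      exact hwa (eval_mul_of_eq s n a hna)
    obtain ⟨q, rfl⟩ := (hf.2 w).mp hw
    exact Ideal.mul_mem_left _ q (Ideal.mem_span_singleton_self f)
  have htop : (1 : K[X]) ∈ Ideal.span {d} ⊔ Ideal.span {n} := hnS.2 ▸ Submodule.mem_top
  obtain ⟨j, hj, u, hu, hju⟩ := Submodule.mem_sup.mp htop
  have hfd : Ideal.span {f} ≤ Ideal.span {d} := (Ideal.span_singleton_le_iff_mem _).mpr hd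
  have hg : ∀ g : K[X], g = g * j + g * u := fun g => by rw [← mul_add, hju, mul_one]
  refine ⟨u, fun g => ⟨fun h => ?_, fun h => hcap _ ?_ (Ideal.mul_mem_left _ g hu)⟩⟩
  · rw [hg g]
    exact Ideal.add_mem _ (Ideal.mul_mem_left _ g hj) (hfd h)
  · rw [eq_sub_of_add_eq' (hg g).symm]
    exact Ideal.sub_mem _ h (Ideal.mul_mem_left _ g hj)

/-- A right factor `d` of a minimal polynomial generates the ideal of `V(d)`. -/
lemma mem_span_of_vanish {K : Type*} [DivisionRing K] (Δ : Set K) (f d : K[X])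
    (hf : IsMinPolyOf Δ f) (hd : f ∈ Ideal.span {d}) (g : K[X])
    (hg : ∀ a, d.eval a = 0 → g.eval a = 0) : g ∈ Ideal.span {d} := by
  obtain ⟨u, hu⟩ := exists_annihilated Δ f d hf hd
  have hmem : ∀ g : K[X], g ∈ Ideal.span {f} ↔ ∀ a ∈ Δ, g.eval a = 0 := fun g => by
    rw [hf.2 g, Ideal.mem_span_singleton']
    simp only [eq_comm]
  have hdu := (hmem _).mp ((hu d).mpr (Ideal.mem_span_singleton_self d))
  rw [← hu, hmem]
  intro a ha
  by_cases hua : u.eval a = 0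
  · exact eval_mul_of_eq g u a hua
  · have h1 := hdu a ha
    rw [eval_mul_of_ne d u a hua] at h1
    rw [eval_mul_of_ne g u a hua, hg _ ((mul_eq_zero.mp h1).resolve_right hua), zero_mul]

/-- **Second Rank Theorem.** For an algebraic set `Δ` disjoint from `V(h)`, the image
`Φ_h(Δ)` is algebraic and `rk Φ_h(Δ) = rk Δ − rk (Δ̄ ∩ V(h))`; in particular
`rk Φ_h(Δ) = rk Δ` iff `Δ̄ ∩ V(h) = ∅`. -/
theorem stmt14 {K : Type*} [DivisionRing K] (h : K[X]) (Δ : Set K)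
    (hΔ : IsAlgebraicSet Δ) (hdisj : Δ ∩ zeroSet h = ∅)
    (fΔ fI : K[X]) (hfΔ : IsMinPolyOf Δ fΔ)
    (hfI : IsMinPolyOf (zeroSet fΔ ∩ zeroSet h) fI) :
    IsAlgebraicSet {y : K | ∃ x ∈ Δ, y = h.eval x * x * (h.eval x)⁻¹} ∧
    ∃ fΦ : K[X],
      IsMinPolyOf {y : K | ∃ x ∈ Δ, y = h.eval x * x * (h.eval x)⁻¹} fΦ ∧
      fΦ.natDegree = fΔ.natDegree - fI.natDegree ∧
      (fΦ.natDegree = fΔ.natDegree ↔ zeroSet fΔ ∩ zeroSet h = ∅) := by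
  have hf0 : fΔ ≠ 0 := hfΔ.1.ne_zero
  have hI0 : fI ≠ 0 := hfI.1.ne_zero
  have hne : ∀ x ∈ Δ, h.eval x ≠ 0 := fun x hx h0 =>
    (Set.eq_empty_iff_forall_notMem.mp hdisj x) ⟨hx, h0⟩
  -- The ideal of `Φ_h(Δ)` is `{g : g * h ∈ R fΔ}`.
  have hker : ∀ g : K[X],
      (∀ a ∈ {y : K | ∃ x ∈ Δ, y = h.eval x * x * (h.eval x)⁻¹}, g.eval a = 0) ↔
        g ∈ LinearMap.ker (colonMap fΔ h) := by
    intro g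
    rw [mem_ker_colonMap, Ideal.mem_span_singleton']
    have h1 := hfΔ.2 (g * h)
    simp only [eq_comm (a := g * h)] at h1
    rw [← h1]
    constructor
    · intro hg x hx
      rw [eval_mul_of_ne g h x (hne x hx), hg _ ⟨x, hx, rfl⟩, zero_mul]
    · rintro hg _ ⟨x, hx, rfl⟩
      have h2 := hg x hx
      rw [eval_mul_of_ne g h x (hne x hx)] at h2
      exact (mul_eq_zero.mp h2).resolve_right (hne x hx)
  obtain ⟨fΦ, hmon, hspan⟩ := exists_monic_generator _ (ker_colonMap_ne_bot fΔ h hf0)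
  have hmin : IsMinPolyOf {y : K | ∃ x ∈ Δ, y = h.eval x * x * (h.eval x)⁻¹} fΦ := by
    refine ⟨hmon, fun g => ?_⟩
    rw [hker, hspan, Ideal.mem_span_singleton']
    simp only [eq_comm]
  have hfvan : ∀ a ∈ zeroSet fΔ ∩ zeroSet h, fΔ.eval a = 0 := fun a ha => ha.1
  have hhvan : ∀ a ∈ zeroSet fΔ ∩ zeroSet h, h.eval a = 0 := fun a ha => ha.2
  obtain ⟨p, hp⟩ := (hfI.2 fΔ).mp hfvan
  obtain ⟨h', hh'⟩ := (hfI.2 h).mp hhvan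
  have hp0 : p ≠ 0 := by
    rintro rfl
    exact hf0 (by rw [hp, zero_mul])
  have hdeg : fΔ.natDegree = p.natDegree + fI.natDegree := by
    rw [hp, natDegree_mul hp0 hI0]
  -- `fI` lies in `R fΔ + R h`, by the description of the ideal of `V(d)`.
  have hbez : fI ∈ Ideal.span {fΔ} ⊔ Ideal.span {h} := by
    have hfJ : fΔ ∈ Ideal.span {fΔ} ⊔ Ideal.span {h} :=
      Submodule.mem_sup_left (Ideal.mem_span_singleton_self fΔ)
    have hhJ : h ∈ Ideal.span {fΔ} ⊔ Ideal.span {h} :=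
      Submodule.mem_sup_right (Ideal.mem_span_singleton_self h)
    obtain ⟨d, -, hd⟩ := exists_monic_generator (Ideal.span {fΔ} ⊔ Ideal.span {h})
      (fun hb => hf0 (by rw [hb] at hfJ; simpa using hfJ))
    rw [hd] at hfJ hhJ ⊢
    refine mem_span_of_vanish Δ fΔ d hfΔ hfJ fI fun a ha => ?_
    refine (hfI.2 fI).mpr ⟨1, by simp⟩ a ⟨?_, ?_⟩
    · obtain ⟨q, hq⟩ := Ideal.mem_span_singleton'.mp hfJ
      change fΔ.eval a = 0
      rw [← hq, eval_mul_of_eq q d a ha]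
    · obtain ⟨q, hq⟩ := Ideal.mem_span_singleton'.mp hhJ
      change h.eval a = 0
      rw [← hq, eval_mul_of_eq q d a ha]
  have hone : ∃ α β : K[X], α * p + β * h' = 1 := by
    obtain ⟨x, hx, y, hy, hxy⟩ := Submodule.mem_sup.mp hbez
    obtain ⟨α, rfl⟩ := Ideal.mem_span_singleton'.mp hx
    obtain ⟨β, rfl⟩ := Ideal.mem_span_singleton'.mp hy
    refine ⟨α, β, mul_right_cancel₀ hI0 ?_⟩
    rw [add_mul, mul_assoc, mul_assoc, ← hp, ← hh', hxy, one_mul]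
  have hkereq : LinearMap.ker (colonMap p h') = Ideal.span {fΦ} := by
    rw [← hspan]
    ext g
    rw [mem_ker_colonMap, mem_ker_colonMap, Ideal.mem_span_singleton', Ideal.mem_span_singleton']
    refine exists_congr fun a => ?_
    rw [hp, hh', ← mul_assoc, ← mul_assoc]
    exact (mul_left_inj' hI0).symm
  have hsurj : Function.Surjective (colonMap p h') := by
    obtain ⟨α, β, hαβ⟩ := hone
    intro y
    obtain ⟨x, rfl⟩ := Submodule.mkQ_surjective _ y
    refine ⟨x * β, ?_⟩
    rw [colonMap, LinearMap.toSpanSingleton_apply, ← Submodule.Quotient.mk_smul]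
    change Submodule.Quotient.mk _ = Submodule.Quotient.mk x
    rw [eq_comm, Submodule.Quotient.eq, smul_eq_mul, Ideal.mem_span_singleton']
    refine ⟨x * α, ?_⟩
    rw [eq_sub_iff_add_eq, mul_assoc, mul_assoc, ← mul_add, hαβ, mul_one]
  have hdegΦ : fΦ.natDegree = p.natDegree := by
    rw [← finrank_quot fΦ hmon.ne_zero, ← finrank_quot p hp0]
    exact ((((Submodule.quotEquivOfEq _ _ hkereq).symm.trans
      ((colonMap p h').quotKerEquivOfSurjective hsurj))).restrictScalars K).finrank_eq
  refine ⟨⟨fΦ, hmon.ne_zero, (hmin.2 fΦ).mpr ⟨1, by simp⟩⟩, fΦ, hmin, by omega, ?_⟩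
  have hI1 : fI.natDegree = 0 ↔ zeroSet fΔ ∩ zeroSet h = ∅ := by
    constructor
    · intro h0
      have h1 : fI = 1 := hfI.1.natDegree_eq_zero.mp h0
      rw [Set.eq_empty_iff_forall_notMem]
      intro a ha
      have := (hfI.2 fI).mpr ⟨1, by simp⟩ a ha
      simp [h1] at this
    · intro he
      obtain ⟨q, hq⟩ := (hfI.2 1).mp (by simp [he])
      have hqI : q * fI ≠ 0 := hq ▸ one_ne_zero
      have h1 := natDegree_mul (left_ne_zero_of_mul hqI) hI0
      rw [← hq, natDegree_one] at h1
      omega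
  rw [← hI1]
  omega
end
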